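/- arXiv:math/0308145 — 8 statements merged into one kernel-verified Lean document; each statement's English description precedes it below -/
import Mathlib

section
/- Let E, F be Banach spaces, n ≥ 2 and 0 < p < ∞. A continuous n-linear map T : E × ⋯ × E → F is of absolutely p-summing type if and only if for every i ∈ {1, …, n} there exists C_i ≥ 0 such that (∑_{j=1}^m ‖T(x_j^{(1)}, …, x_j^{(n)})‖^p)^{1/p} ≤ C_i ‖(x_j^{(i)})_{j=1}^m‖_{w,p} ∏_{k ≠ i} max_{1 ≤ j ≤ m} ‖x_j^{(k)}‖ for every m ∈ ℕ and all finite families x_j^{(k)} ∈ E; that is, T is of absolutely p-summing type if and only if T is absolutely (p; q_1, …, q_n)-summing for each of the n choices with q_i = p and q_k = ∞ for k ≠ i. -/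
open MeasureTheory

/-- Weak `ℓ_q` norm of a finite family in a normed space. -/
noncomputable def weakLpNorm (𝕜 : Type*) [RCLike 𝕜] {E : Type*} [NormedAddCommGroup E]
    [NormedSpace 𝕜 E] (q : ℝ) {m : ℕ} (x : Fin m → E) : ℝ :=
  ⨆ φ : {φ : E →L[𝕜] 𝕜 // ‖φ‖ ≤ 1}, (∑ j, ‖φ.1 (x j)‖ ^ q) ^ (1 / q)

/-- `T` satisfies the `p`-semi-integral inequality with constant `C`, witnessed by a regular
Borel probability measure on the product of the closed dual unit balls with their
weak-star topologies. -/
def SemiIntegralWith (𝕜 : Type*) [RCLike 𝕜] {ι : Type*} [Fintype ι] {E : ι → Type*}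
    [∀ i, NormedAddCommGroup (E i)] [∀ i, NormedSpace 𝕜 (E i)]
    {F : Type*} [NormedAddCommGroup F]
    (p C : ℝ) (T : (∀ i, E i) → F) : Prop :=
  letI : MeasurableSpace (∀ i, {φ : WeakDual 𝕜 (E i) // ∀ z, ‖φ z‖ ≤ ‖z‖}) := borel _
  ∃ μ : Measure (∀ i, {φ : WeakDual 𝕜 (E i) // ∀ z, ‖φ z‖ ≤ ‖z‖}),
    IsProbabilityMeasure μ ∧ μ.Regular ∧
      ∀ x : ∀ i, E i,
        ‖T x‖ ≤ C * (∫ φ, ∏ i, ‖(φ i).1 (x i)‖ ^ p ∂μ) ^ (1 / p)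

/-- The `si,p` norm: infimum of admissible constants. -/
noncomputable def siNorm (𝕜 : Type*) [RCLike 𝕜] {ι : Type*} [Fintype ι] {E : ι → Type*}
    [∀ i, NormedAddCommGroup (E i)] [∀ i, NormedSpace 𝕜 (E i)]
    {F : Type*} [NormedAddCommGroup F]
    (p : ℝ) (T : (∀ i, E i) → F) : ℝ :=
  sInf {C : ℝ | 0 ≤ C ∧ SemiIntegralWith 𝕜 p C T}

/-- `T` is absolutely `(p; q₁,…,qₙ)`-summing with constant `C`. -/
def AbsSummingWith (𝕜 : Type*) [RCLike 𝕜] {ι : Type*} [Fintype ι] {E : ι → Type*}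
    [∀ i, NormedAddCommGroup (E i)] [∀ i, NormedSpace 𝕜 (E i)]
    {F : Type*} [NormedAddCommGroup F]
    (p : ℝ) (q : ι → ℝ) (C : ℝ) (T : (∀ i, E i) → F) : Prop :=
  ∀ (m : ℕ) (x : ∀ i, Fin m → E i),
    (∑ j, ‖T (fun i => x i j)‖ ^ p) ^ (1 / p) ≤ C * ∏ i, weakLpNorm 𝕜 (q i) (x i)

/-- `T` is `p`-dominated with constant `C`, witnessed by regular Borel probability measures
on the closed dual unit balls with their weak-star topologies. -/
def DominatedWith (𝕜 : Type*) [RCLike 𝕜] {ι : Type*} [Fintype ι] {E : ι → Type*}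
    [∀ i, NormedAddCommGroup (E i)] [∀ i, NormedSpace 𝕜 (E i)]
    {F : Type*} [NormedAddCommGroup F]
    (p C : ℝ) (T : (∀ i, E i) → F) : Prop :=
  letI : ∀ i, MeasurableSpace {φ : WeakDual 𝕜 (E i) // ∀ z, ‖φ z‖ ≤ ‖z‖} := fun i => borel _
  ∃ μ : ∀ i, Measure {φ : WeakDual 𝕜 (E i) // ∀ z, ‖φ z‖ ≤ ‖z‖},
    (∀ i, IsProbabilityMeasure (μ i)) ∧ (∀ i, (μ i).Regular) ∧
      ∀ x : ∀ i, E i,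
        ‖T x‖ ≤ C * ∏ i, (∫ φ, ‖φ.1 (x i)‖ ^ p ∂(μ i)) ^ (1 / p)

/-- `E` is an `𝓛_∞`-space. -/
def IsLinftySpace (𝕜 : Type*) [RCLike 𝕜] (E : Type*) [NormedAddCommGroup E]
    [NormedSpace 𝕜 E] : Prop :=
  ∃ lam : ℝ, 1 ≤ lam ∧ ∀ M : Submodule 𝕜 E, FiniteDimensional 𝕜 M →
    ∃ N : Submodule 𝕜 E, M ≤ N ∧ FiniteDimensional 𝕜 N ∧
      ∃ v : N ≃L[𝕜] (Fin (Module.finrank 𝕜 N) → 𝕜),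
        ‖(v : N →L[𝕜] (Fin (Module.finrank 𝕜 N) → 𝕜))‖ *
          ‖(v.symm : (Fin (Module.finrank 𝕜 N) → 𝕜) →L[𝕜] N)‖ ≤ lam

/-- `F` has cotype `q`. -/
def HasCotype (q : ℝ) (F : Type*) [NormedAddCommGroup F] : Prop :=
  ∃ C : ℝ, 0 ≤ C ∧ ∀ (m : ℕ) (x : Fin m → F),
    (∑ j, ‖x j‖ ^ q) ^ (1 / q) ≤
      C * ((∑ ε : Fin m → Bool, ‖∑ j, (if ε j then x j else -x j)‖ ^ (2 : ℝ)) / 2 ^ m)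
        ^ ((1 : ℝ) / 2)

theorem aux_weak_nonneg (𝕜 : Type*) [RCLike 𝕜] {E : Type*} [NormedAddCommGroup E]
    [NormedSpace 𝕜 E] (q : ℝ) {m : ℕ} (x : Fin m → E) : 0 ≤ weakLpNorm 𝕜 q x :=
  Real.iSup_nonneg fun _ => by positivity

theorem aux_bdd {𝕜 : Type*} [RCLike 𝕜] {E : Type*} [NormedAddCommGroup E]
    [NormedSpace 𝕜 E] {F : Type*} [NormedAddCommGroup F] [NormedSpace 𝕜 F] {n : ℕ}
    (T : ContinuousMultilinearMap 𝕜 (fun _ : Fin n => E) F) (i : Fin n) (a : E) :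
    BddAbove (Set.range fun y : {k : Fin n // k ≠ i} → {z : E // ‖z‖ ≤ 1} =>
      ‖T (fun k => if h : k = i then a else (y ⟨k, h⟩).1)‖) := by
  refine ⟨‖T‖ * ∏ k : Fin n, (‖a‖ + 1), ?_⟩
  rintro _ ⟨y, rfl⟩
  refine (T.le_opNorm _).trans ?_
  refine mul_le_mul_of_nonneg_left ?_ (norm_nonneg _)
  refine Finset.prod_le_prod (fun _ _ => norm_nonneg _) fun k _ => ?_
  by_cases h : k = i
  · simp [h]
  · simp only [h, dite_false]
    have := (y ⟨k, h⟩).2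
    have := norm_nonneg a
    linarith

theorem aux_le {𝕜 : Type*} [RCLike 𝕜] {E : Type*} [NormedAddCommGroup E]
    [NormedSpace 𝕜 E] {F : Type*} [NormedAddCommGroup F] [NormedSpace 𝕜 F] {n : ℕ}
    (T : ContinuousMultilinearMap 𝕜 (fun _ : Fin n => E) F) (i : Fin n) (v : Fin n → E) :
    ‖T v‖ ≤ (⨆ y : {k : Fin n // k ≠ i} → {z : E // ‖z‖ ≤ 1},
      ‖T (fun k => if h : k = i then v i else (y ⟨k, h⟩).1)‖) *
        ∏ k ∈ Finset.univ.erase i, ‖v k‖ := by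
  have hw : ∀ z : E, ‖((‖z‖⁻¹ : ℝ) : 𝕜) • z‖ ≤ 1 := by
    intro z
    rw [norm_smul, RCLike.norm_ofReal, abs_of_nonneg (by positivity)]
    exact inv_mul_le_one
  let y : {k : Fin n // k ≠ i} → {z : E // ‖z‖ ≤ 1} :=
    fun k => ⟨((‖v k‖⁻¹ : ℝ) : 𝕜) • v k, hw _⟩
  let c : Fin n → 𝕜 := fun k => if k = i then 1 else ((‖v k‖ : ℝ) : 𝕜)
  have hv : v = fun k => c k • (if h : k = i then v i else (y ⟨k, h⟩).1) := by
    funext k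
    by_cases h : k = i
    · subst h; simp [c]
    · by_cases h0 : v k = 0
      · simp [c, h, y, h0]
      · have h1 : ((‖v k‖ : ℝ) : 𝕜) ≠ 0 := by simpa using h0
        simp [c, h, y, smul_smul, h1]
  have hT : T v = (∏ k, c k) • T (fun k => if h : k = i then v i else (y ⟨k, h⟩).1) := by
    conv_lhs => rw [hv]
    exact T.map_smul_univ c _
  have hc : ‖∏ k, c k‖ = ∏ k ∈ Finset.univ.erase i, ‖v k‖ := by
    rw [norm_prod, ← Finset.mul_prod_erase _ _ (Finset.mem_univ i)]
    simp only [c, if_true, norm_one, one_mul]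
    refine Finset.prod_congr rfl fun k hk => ?_
    simp [Finset.ne_of_mem_erase hk]
  rw [hT, norm_smul, hc, mul_comm]
  refine mul_le_mul_of_nonneg_right (le_ciSup (aux_bdd T i (v i)) y) ?_
  exact Finset.prod_nonneg fun _ _ => norm_nonneg _

/-- `T` is of absolutely `p`-summing type (each `Ψᵢ(T)` is an absolutely
`p`-summing linear operator, the norm of `Ψᵢ(T)(x)` being the sup over the product of the
closed unit balls of the remaining coordinates) if and only if for every `i` it is absolutely
`(p; q₁,…,qₙ)`-summing with `qᵢ = p` and `q_k = ∞` for `k ≠ i` (weak `ℓ_∞` norm = max of the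
norms). -/
theorem absSummingType_iff {𝕜 : Type*} [RCLike 𝕜] {E : Type*} [NormedAddCommGroup E]
    [NormedSpace 𝕜 E] [CompleteSpace E]
    {F : Type*} [NormedAddCommGroup F] [NormedSpace 𝕜 F] [CompleteSpace F]
    {n : ℕ} (hn : 2 ≤ n) {p : ℝ} (hp : 0 < p)
    (T : ContinuousMultilinearMap 𝕜 (fun _ : Fin n => E) F) :
    (∀ i : Fin n, ∃ C, 0 ≤ C ∧ ∀ (m : ℕ) (x : Fin m → E),
        (∑ j, (⨆ y : {k : Fin n // k ≠ i} → {z : E // ‖z‖ ≤ 1},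
            ‖T (fun k => if h : k = i then x j else (y ⟨k, h⟩).1)‖) ^ p) ^ (1 / p)
          ≤ C * weakLpNorm 𝕜 p x) ↔
    (∀ i : Fin n, ∃ C, 0 ≤ C ∧ ∀ (m : ℕ) (x : Fin n → Fin m → E),
        (∑ j, ‖T (fun k => x k j)‖ ^ p) ^ (1 / p) ≤
          C * weakLpNorm 𝕜 p (x i) * ∏ k ∈ Finset.univ.erase i, ⨆ j, ‖x k j‖) := by
  constructor
  · intro H i
    obtain ⟨C, hC, H⟩ := H i
    refine ⟨C, hC, fun m x => ?_⟩
    set P : ℝ := ∏ k ∈ Finset.univ.erase i, ⨆ j, ‖x k j‖ with hP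
    have hP0 : 0 ≤ P :=
      Finset.prod_nonneg fun _ _ => Real.iSup_nonneg fun _ => norm_nonneg _
    have h1 := H m (x i)
    set S : Fin m → ℝ := fun j => ⨆ y : {k : Fin n // k ≠ i} → {z : E // ‖z‖ ≤ 1},
            ‖T (fun k => if h : k = i then x i j else (y ⟨k, h⟩).1)‖ with hS
    have hS0 : ∀ j, 0 ≤ S j := fun j => Real.iSup_nonneg fun _ => norm_nonneg _
    have h2 : ∀ j, ‖T (fun k => x k j)‖ ≤ S j * P := by
      intro j
      refine (aux_le T i (fun k => x k j)).trans ?_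
      refine mul_le_mul_of_nonneg_left ?_ (hS0 j)
      refine Finset.prod_le_prod (fun _ _ => norm_nonneg _) fun k _ => ?_
      exact le_ciSup (f := fun j => ‖x k j‖) (Set.finite_range _).bddAbove j
    calc (∑ j, ‖T (fun k => x k j)‖ ^ p) ^ (1 / p)
        ≤ (∑ j, (S j * P) ^ p) ^ (1 / p) := by
          refine Real.rpow_le_rpow (Finset.sum_nonneg fun _ _ => by positivity) ?_
            (by positivity)
          exact Finset.sum_le_sum fun j _ =>
            Real.rpow_le_rpow (norm_nonneg _) (h2 j) hp.le
      _ = (∑ j, S j ^ p) ^ (1 / p) * P := by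
          simp_rw [Real.mul_rpow (hS0 _) hP0]
          rw [← Finset.sum_mul, Real.mul_rpow
            (Finset.sum_nonneg fun j _ => Real.rpow_nonneg (hS0 j) _)
            (Real.rpow_nonneg hP0 _), ← Real.rpow_mul hP0, mul_one_div_cancel hp.ne',
            Real.rpow_one]
      _ ≤ _ := mul_le_mul_of_nonneg_right h1 hP0
  · intro H i
    obtain ⟨C, hC, H⟩ := H i
    refine ⟨C, hC, fun m x => ?_⟩
    have hW := aux_weak_nonneg 𝕜 p x
    haveI : Nonempty {z : E // ‖z‖ ≤ 1} := ⟨⟨0, by simp⟩⟩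
    have hex : ∀ j, ∃ y : ℕ → ({k : Fin n // k ≠ i} → {z : E // ‖z‖ ≤ 1}),
        Filter.Tendsto (fun N => ‖T (fun k => if h : k = i then x j else (y N ⟨k, h⟩).1)‖)
          Filter.atTop (nhds (⨆ y : {k : Fin n // k ≠ i} → {z : E // ‖z‖ ≤ 1},
            ‖T (fun k => if h : k = i then x j else (y ⟨k, h⟩).1)‖)) := by
      intro j
      obtain ⟨u, -, hu, hmem⟩ := exists_seq_tendsto_sSup (Set.range_nonempty _)
        (aux_bdd T i (x j))
      choose y hy using hmem
      refine ⟨y, ?_⟩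
      have : u = fun N => ‖T (fun k => if h : k = i then x j else (y N ⟨k, h⟩).1)‖ :=
        funext fun N => (hy N).symm
      rw [← this]
      exact hu
    choose y hy using hex
    have hlim : Filter.Tendsto (fun N => (∑ j, ‖T (fun k => if h : k = i then x j
        else (y j N ⟨k, h⟩).1)‖ ^ p) ^ (1 / p)) Filter.atTop
        (nhds ((∑ j, (⨆ y : {k : Fin n // k ≠ i} → {z : E // ‖z‖ ≤ 1},
            ‖T (fun k => if h : k = i then x j else (y ⟨k, h⟩).1)‖) ^ p) ^ (1 / p))) :=
      (tendsto_finsetSum _ fun j _ => (hy j).rpow_const (Or.inr hp.le)).rpow_const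
        (Or.inr (by positivity))
    refine le_of_tendsto' hlim fun N => ?_
    have h1 := H m (fun k j => if h : k = i then x j else (y j N ⟨k, h⟩).1)
    simp only [dite_true] at h1
    refine h1.trans ?_
    refine mul_le_of_le_one_right (mul_nonneg hC hW) ?_
    refine Finset.prod_le_one (fun _ _ => Real.iSup_nonneg fun _ => norm_nonneg _)
      fun k hk => Real.iSup_le (fun j => ?_) zero_le_one
    simp only [Finset.ne_of_mem_erase hk, dite_false]
    exact (y j N _).2
end

section
/- Let E, F be Banach spaces, n ≥ 2 and 0 < p < ∞. Every p-dominated continuous n-linear map T : E × ⋯ × E → F is p-semi-integral. -/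
open MeasureTheory

/-- Riesz representation: a probability measure on a σ-algebra making all continuous functions
measurable induces a regular Borel probability measure with the same integrals. -/
theorem aux_exists_regular_borel {K : Type*} [TopologicalSpace K] [CompactSpace K] [T2Space K]
    [mK : MeasurableSpace K] (π : Measure K) [hπ : IsProbabilityMeasure π]
    (hmeas : ∀ f : C(K, ℝ), Measurable f) :
    letI b : MeasurableSpace K := borel K
    ∃ ν : @Measure K b, @IsProbabilityMeasure K b ν ∧ @Measure.Regular K b _ ν ∧
      ∀ f : C(K, ℝ), @integral K ℝ _ _ b ν f = @integral K ℝ _ _ mK π f := by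
  have hint : ∀ f : C(K, ℝ), Integrable f π := by
    intro f
    refine Integrable.of_bound (hmeas f).aestronglyMeasurable ‖f‖ ?_
    exact Filter.Eventually.of_forall (fun x => f.norm_coe_le_norm x)
  let Λ : CompactlySupportedContinuousMap K ℝ →ₚ[ℝ] ℝ := PositiveLinearMap.mk₀
    { toFun := fun f => ∫ x, f x ∂π
      map_add' := fun f g => integral_add (hint f.toContinuousMap) (hint g.toContinuousMap)
      map_smul' := fun c f => integral_const_mul c (fun x => f x) }
    (fun f hf => integral_nonneg (fun x => hf x))
  have hΛ : ∀ f, Λ f = ∫ x, f x ∂π := fun f => rfl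
  clear_value Λ
  have key : ∀ f : C(K, ℝ), ∃ g : CompactlySupportedContinuousMap K ℝ, ∀ x, g x = f x :=
    fun f => ⟨CompactlySupportedContinuousMap.continuousMapEquiv f, fun x => rfl⟩
  have h2 : ∀ f : C(K, ℝ), ∃ g : CompactlySupportedContinuousMap K ℝ,
      (∀ x, g x = f x) ∧ Λ g = ∫ x, f x ∂π := by
    intro f
    obtain ⟨g, hg⟩ := key f
    refine ⟨g, hg, ?_⟩
    rw [hΛ]
    simp only [hg]
  have h1 : ∫ x, (1 : C(K, ℝ)) x ∂π = 1 := by simp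
  generalize hI : (fun f : C(K, ℝ) => ∫ x, f x ∂π) = I at *
  have hI' : ∀ f : C(K, ℝ), ∫ x, f x ∂π = I f := fun f => congrFun hI f
  simp only [hI'] at *
  clear hI hI' hΛ hint hmeas
  clear hπ π
  clear mK
  letI b : MeasurableSpace K := borel K
  haveI : BorelSpace K := ⟨rfl⟩
  have hf : ∀ f : C(K, ℝ), ∫ x, f x ∂(RealRMK.rieszMeasure Λ) = I f := by
    intro f
    obtain ⟨g, hg, hg'⟩ := h2 f
    rw [← hg', ← RealRMK.integral_rieszMeasure]
    simp only [hg]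
  refine ⟨RealRMK.rieszMeasure Λ, ?_, inferInstance, hf⟩
  have := hf 1
  rw [h1] at this
  simp only [ContinuousMap.one_apply, integral_const, smul_eq_mul, mul_one] at this
  constructor
  rw [Measure.real, ENNReal.toReal_eq_one_iff] at this
  exact this

/-- Continuous real functions on a finite product of compact Hausdorff spaces are measurable for
the product of the Borel σ-algebras (Stone–Weierstrass). -/
theorem aux_measurable_pi {ι : Type*} {X : ι → Type*}
    [∀ i, TopologicalSpace (X i)] [∀ i, CompactSpace (X i)] [∀ i, T2Space (X i)]
    [∀ i, MeasurableSpace (X i)] [∀ i, BorelSpace (X i)] (f : C(∀ i, X i, ℝ)) :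
    Measurable f := by
  let A : Subalgebra ℝ C(∀ i, X i, ℝ) :=
    { carrier := {g | Measurable g}
      mul_mem' := fun {a b} ha hb => Measurable.mul ha hb
      add_mem' := fun {a b} ha hb => Measurable.add ha hb
      algebraMap_mem' := fun r => measurable_const }
  have hA : A.SeparatesPoints := by
    intro x y hxy
    obtain ⟨i, hi⟩ := Function.ne_iff.mp hxy
    obtain ⟨g, hg0, hg1, -⟩ := exists_continuous_zero_one_of_isClosed
      (isClosed_singleton (x := x i)) (isClosed_singleton (x := y i)) (by simpa using hi)
    refine ⟨fun z => g (z i), ⟨g.comp ⟨fun z => z i, continuous_apply i⟩, ?_, rfl⟩, ?_⟩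
    · exact g.continuous.measurable.comp (measurable_pi_apply i)
    · have h0 := hg0 (Set.mem_singleton _)
      have h1 := hg1 (Set.mem_singleton _)
      simp [h0, h1]
  have hex : ∀ n : ℕ, ∃ g : A, ∀ x, ‖(g : C(∀ i, X i, ℝ)) x - f x‖ < 1 / ((n : ℝ) + 1) :=
    fun n => ContinuousMap.exists_mem_subalgebra_near_continuous_of_separatesPoints A hA f
      f.continuous _ (by positivity)
  choose g hg using hex
  refine measurable_of_tendsto_metrizable (f := fun n => ((g n : C(∀ i, X i, ℝ)) : _ → ℝ))
    (fun n => (g n).2) ?_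
  rw [tendsto_pi_nhds]
  intro x
  rw [tendsto_iff_norm_sub_tendsto_zero]
  exact squeeze_zero (fun n => norm_nonneg _) (fun n => (hg n x).le)
    tendsto_one_div_add_atTop_nhds_zero_nat

theorem aux_compact_ball (𝕜 : Type*) [RCLike 𝕜] (E : Type*) [NormedAddCommGroup E]
    [NormedSpace 𝕜 E] : CompactSpace {φ : WeakDual 𝕜 E // ∀ z, ‖φ z‖ ≤ ‖z‖} := by
  have h := WeakDual.isCompact_closedBall (0 : StrongDual 𝕜 E) 1
  have he : (WeakDual.toStrongDual ⁻¹' Metric.closedBall (0 : StrongDual 𝕜 E) 1) =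
      {φ : WeakDual 𝕜 E | ∀ z, ‖φ z‖ ≤ ‖z‖} := by
    ext φ
    simp only [Set.mem_preimage, mem_closedBall_zero_iff, Set.mem_setOf_eq]
    rw [ContinuousLinearMap.opNorm_le_iff zero_le_one]
    simp
  rw [he] at h
  exact isCompact_iff_compactSpace.mp h

/-- Every `p`-dominated continuous `n`-linear map (`n ≥ 2`) is
`p`-semi-integral. -/
theorem semiIntegral_of_dominated {𝕜 : Type*} [RCLike 𝕜] {E : Type*} [NormedAddCommGroup E]
    [NormedSpace 𝕜 E] [CompleteSpace E]
    {F : Type*} [NormedAddCommGroup F] [NormedSpace 𝕜 F] [CompleteSpace F]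
    {n : ℕ} (hn : 2 ≤ n) {p : ℝ} (hp : 0 < p)
    (T : ContinuousMultilinearMap 𝕜 (fun _ : Fin n => E) F)
    (hT : ∃ C, 0 ≤ C ∧ DominatedWith 𝕜 p C ⇑T) :
    ∃ C, 0 ≤ C ∧ SemiIntegralWith 𝕜 p C ⇑T := by
  obtain ⟨C, hC, μ, hμ, -, hle⟩ := hT
  refine ⟨C, hC, ?_⟩
  haveI := aux_compact_ball 𝕜 E
  letI : MeasurableSpace {φ : WeakDual 𝕜 E // ∀ z, ‖φ z‖ ≤ ‖z‖} := borel _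
  haveI : BorelSpace {φ : WeakDual 𝕜 E // ∀ z, ‖φ z‖ ≤ ‖z‖} := ⟨rfl⟩
  obtain ⟨ν, hν, hreg, hint⟩ := aux_exists_regular_borel
    (K := Fin n → {φ : WeakDual 𝕜 E // ∀ z, ‖φ z‖ ≤ ‖z‖}) (Measure.pi μ)
    (fun f => aux_measurable_pi f)
  refine ⟨ν, hν, hreg, fun x => (hle x).trans_eq ?_⟩
  have hcont : Continuous (fun φ : Fin n → {φ : WeakDual 𝕜 E // ∀ z, ‖φ z‖ ≤ ‖z‖} =>
      ∏ i, ‖(φ i).1 (x i)‖ ^ p) := by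
    refine continuous_finsetProd _ (fun i _ => ?_)
    refine Continuous.rpow_const ?_ (fun _ => Or.inr hp.le)
    exact ((WeakDual.eval_continuous (x i)).comp
      (continuous_subtype_val.comp (continuous_apply i))).norm
  have h := hint ⟨_, hcont⟩
  simp only [ContinuousMap.coe_mk] at h
  have h3 := integral_fintype_prod_eq_prod (μ := μ)
    (fun i (φ : {φ : WeakDual 𝕜 E // ∀ z, ‖φ z‖ ≤ ‖z‖}) => ‖φ.1 (x i)‖ ^ p)
  rw [h3] at h
  rw [Real.finsetProd_rpow _ _ (fun i _ => integral_nonneg fun φ => by positivity), ← h]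
end

section
/- Let E, F be Banach spaces, n ≥ 2 and 0 < p < ∞. Every p-semi-integral continuous n-linear map T : E × ⋯ × E → F is of absolutely p-summing type, i.e., Ψ_j^{(n)}(T) is an absolutely p-summing linear operator for every j = 1, …, n. -/
open MeasureTheory

/-- Every `p`-semi-integral continuous `n`-linear map (`n ≥ 2`) is of
absolutely `p`-summing type: each `Ψⱼ(T)` is an absolutely `p`-summing linear operator (the
norm of `Ψⱼ(T)(x)` being the sup over the product of the closed unit balls of the remaining
coordinates). -/
theorem absSummingType_of_semiIntegral {𝕜 : Type*} [RCLike 𝕜] {E : Type*}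
    [NormedAddCommGroup E] [NormedSpace 𝕜 E] [CompleteSpace E]
    {F : Type*} [NormedAddCommGroup F] [NormedSpace 𝕜 F] [CompleteSpace F]
    {n : ℕ} (hn : 2 ≤ n) {p : ℝ} (hp : 0 < p)
    (T : ContinuousMultilinearMap 𝕜 (fun _ : Fin n => E) F)
    (hT : ∃ C, 0 ≤ C ∧ SemiIntegralWith 𝕜 p C ⇑T) :
    ∀ i : Fin n, ∃ C, 0 ≤ C ∧ ∀ (m : ℕ) (x : Fin m → E),
      (∑ j, (⨆ y : {k : Fin n // k ≠ i} → {z : E // ‖z‖ ≤ 1},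
          ‖T (fun k => if h : k = i then x j else (y ⟨k, h⟩).1)‖) ^ p) ^ (1 / p)
        ≤ C * weakLpNorm 𝕜 p x := by
  obtain ⟨C, hC, hS⟩ := hT
  intro i
  refine ⟨C, hC, ?_⟩
  intro m x
  letI mK : MeasurableSpace (∀ _ : Fin n, {φ : WeakDual 𝕜 E // ∀ z, ‖φ z‖ ≤ ‖z‖}) := borel _
  haveI : BorelSpace (∀ _ : Fin n, {φ : WeakDual 𝕜 E // ∀ z, ‖φ z‖ ≤ ‖z‖}) := ⟨rfl⟩
  obtain ⟨μ, hμ, -, hT⟩ := hS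
  have hcont : ∀ z : E, Continuous
      (fun φ : (∀ _ : Fin n, {φ : WeakDual 𝕜 E // ∀ z, ‖φ z‖ ≤ ‖z‖}) => ‖(φ i).1 z‖ ^ p) := by
    intro z
    have h1 : Continuous
        (fun φ : (∀ _ : Fin n, {φ : WeakDual 𝕜 E // ∀ z, ‖φ z‖ ≤ ‖z‖}) => (φ i).1 z) :=
      (WeakDual.eval_continuous z).comp (continuous_subtype_val.comp (continuous_apply i))
    exact h1.norm.rpow_const (fun _ => Or.inr hp.le)
  have hint : ∀ z : E, Integrable
      (fun φ : (∀ _ : Fin n, {φ : WeakDual 𝕜 E // ∀ z, ‖φ z‖ ≤ ‖z‖}) => ‖(φ i).1 z‖ ^ p) μ := by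
    intro z
    refine Integrable.of_bound (hcont z).measurable.aestronglyMeasurable (‖z‖ ^ p) ?_
    refine Filter.Eventually.of_forall fun φ => ?_
    rw [Real.norm_of_nonneg (by positivity)]
    exact Real.rpow_le_rpow (norm_nonneg _) ((φ i).2 z) hp.le
  set W := weakLpNorm 𝕜 p x with hW
  have hWle : ∀ φ : E →L[𝕜] 𝕜, ‖φ‖ ≤ 1 → (∑ j, ‖φ (x j)‖ ^ p) ^ (1 / p) ≤ W := by
    intro φ hφ
    refine le_ciSup (f := fun φ : {φ : E →L[𝕜] 𝕜 // ‖φ‖ ≤ 1} =>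
      (∑ j, ‖φ.1 (x j)‖ ^ p) ^ (1 / p)) ?_ ⟨φ, hφ⟩
    refine ⟨(∑ j, ‖x j‖ ^ p) ^ (1 / p), ?_⟩
    rintro _ ⟨ψ, rfl⟩
    refine Real.rpow_le_rpow (by positivity) (Finset.sum_le_sum fun j _ => ?_) (by positivity)
    refine Real.rpow_le_rpow (norm_nonneg _) ?_ hp.le
    exact (ψ.1.le_of_opNorm_le ψ.2 (x j)).trans_eq (one_mul _)
  have hW0 : 0 ≤ W := le_trans (by positivity) (hWle 0 (by simp))
  have hsum : ∀ φ : (∀ _ : Fin n, {φ : WeakDual 𝕜 E // ∀ z, ‖φ z‖ ≤ ‖z‖}),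
      ∑ j, ‖(φ i).1 (x j)‖ ^ p ≤ W ^ p := by
    intro φ
    have h := hWle (WeakDual.toStrongDual (φ i).1)
      (ContinuousLinearMap.opNorm_le_bound _ zero_le_one fun z => by
        rw [one_mul]; exact (φ i).2 z)
    rw [one_div, Real.rpow_inv_le_iff_of_pos (by positivity) hW0 hp] at h
    exact h
  have hsup : ∀ j, (⨆ y : {k : Fin n // k ≠ i} → {z : E // ‖z‖ ≤ 1},
          ‖T (fun k => if h : k = i then x j else (y ⟨k, h⟩).1)‖) ^ p
        ≤ C ^ p * ∫ φ, ‖(φ i).1 (x j)‖ ^ p ∂μ := by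
    intro j
    have hI : 0 ≤ ∫ φ, ‖(φ i).1 (x j)‖ ^ p ∂μ := integral_nonneg fun φ => by positivity
    have h1 : (⨆ y : {k : Fin n // k ≠ i} → {z : E // ‖z‖ ≤ 1},
          ‖T (fun k => if h : k = i then x j else (y ⟨k, h⟩).1)‖)
        ≤ C * (∫ φ, ‖(φ i).1 (x j)‖ ^ p ∂μ) ^ (1 / p) := by
      haveI : Nonempty {z : E // ‖z‖ ≤ 1} := ⟨⟨0, by simp⟩⟩
      refine ciSup_le fun y => (hT _).trans ?_
      refine mul_le_mul_of_nonneg_left ?_ hC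
      refine Real.rpow_le_rpow (integral_nonneg fun φ => by positivity) ?_ (by positivity)
      refine integral_mono_of_nonneg (Filter.Eventually.of_forall fun φ => by positivity)
        (hint (x j)) (Filter.Eventually.of_forall fun φ => ?_)
      beta_reduce
      rw [← Finset.mul_prod_erase Finset.univ _ (Finset.mem_univ i)]
      rw [dif_pos rfl]
      refine mul_le_of_le_one_right (by positivity) ?_
      refine Finset.prod_le_one (fun k _ => by positivity) fun k hk => ?_
      have hki : k ≠ i := Finset.ne_of_mem_erase hk
      rw [dif_neg hki]
      exact Real.rpow_le_one (norm_nonneg _) (((φ k).2 _).trans (y ⟨k, hki⟩).2) hp.le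
    refine (Real.rpow_le_rpow (Real.iSup_nonneg fun _ => norm_nonneg _) h1 hp.le).trans_eq ?_
    rw [Real.mul_rpow hC (by positivity), one_div, Real.rpow_inv_rpow hI hp.ne']
  have hfin : ∑ j, (⨆ y : {k : Fin n // k ≠ i} → {z : E // ‖z‖ ≤ 1},
          ‖T (fun k => if h : k = i then x j else (y ⟨k, h⟩).1)‖) ^ p ≤ (C * W) ^ p := by
    refine (Finset.sum_le_sum fun j _ => hsup j).trans ?_
    rw [← Finset.mul_sum, ← integral_finsetSum _ (fun j _ => hint (x j)), Real.mul_rpow hC hW0]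
    refine mul_le_mul_of_nonneg_left ?_ (by positivity)
    refine (integral_mono (integrable_finsetSum _ fun j _ => hint (x j))
      (integrable_const (W ^ p)) hsum).trans_eq ?_
    simp
  have h0 : 0 ≤ ∑ j, (⨆ y : {k : Fin n // k ≠ i} → {z : E // ‖z‖ ≤ 1},
          ‖T (fun k => if h : k = i then x j else (y ⟨k, h⟩).1)‖) ^ p :=
    Finset.sum_nonneg fun j _ => Real.rpow_nonneg (Real.iSup_nonneg fun _ => norm_nonneg _) _
  rw [one_div, Real.rpow_inv_le_iff_of_pos h0 (by positivity) hp]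
  exact hfin
end

section
/- Let E, F be Banach spaces, n ≥ 2 and 0 < p < ∞. If T : E × ⋯ × E → F is a p-semi-integral continuous n-linear map, then T is absolutely (p; np, …, np)-summing: (∑_{j=1}^m ‖T(x_j^{(1)}, …, x_j^{(n)})‖^p)^{1/p} ≤ ‖T‖_{si,p} ∏_{k=1}^n ‖(x_j^{(k)})_{j=1}^m‖_{w,np} for every m ∈ ℕ and all finite families x_j^{(k)} ∈ E. (This inequality expresses that T is np-dominated.) -/
open MeasureTheory

theorem holder_aux {n m : ℕ} (hn : 0 < n) {p : ℝ} (hp : 0 < p) (a : Fin n → Fin m → ℝ)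
    (ha : ∀ k j, 0 ≤ a k j) (W : Fin n → ℝ) (hW : ∀ k, 0 ≤ W k)
    (h : ∀ k, ∑ j, a k j ^ ((n : ℝ) * p) ≤ W k ^ ((n : ℝ) * p)) :
    ∑ j, ∏ k, a k j ^ p ≤ ∏ k, W k ^ p := by
  have hn' : (0 : ℝ) < n := by exact_mod_cast hn
  have hnp : 0 < (n : ℝ) * p := by positivity
  by_cases hz : ∃ k, W k = 0
  · obtain ⟨k, hk⟩ := hz
    have h0 : ∀ j, a k j = 0 := by
      intro j
      have h1 := h k
      rw [hk, Real.zero_rpow hnp.ne'] at h1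
      have h2 : a k j ^ ((n : ℝ) * p) ≤ 0 :=
        (Finset.single_le_sum (f := fun j => a k j ^ ((n : ℝ) * p))
          (fun i _ => Real.rpow_nonneg (ha k i) _) (Finset.mem_univ j)).trans h1
      have h3 := le_antisymm h2 (Real.rpow_nonneg (ha k j) _)
      exact ((Real.rpow_eq_zero (ha k j) hnp.ne').1 h3)
    have h4 : ∀ j, ∏ k, a k j ^ p = 0 := fun j =>
      Finset.prod_eq_zero (Finset.mem_univ k) (by rw [h0 j, Real.zero_rpow hp.ne'])
    simp only [h4, Finset.sum_const_zero]
    exact Finset.prod_nonneg fun k _ => Real.rpow_nonneg (hW k) _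
  · push Not at hz
    have hWp : ∀ k, 0 < W k := fun k => lt_of_le_of_ne (hW k) (hz k).symm
    have hP : 0 < ∏ k, W k ^ p := Finset.prod_pos fun k _ => Real.rpow_pos_of_pos (hWp k) _
    have key : ∀ j, ∏ k, a k j ^ p ≤
        (∏ k, W k ^ p) * ∑ k, (1 / (n : ℝ)) * (a k j ^ ((n : ℝ) * p) / W k ^ ((n : ℝ) * p)) := by
      intro j
      have := Real.geom_mean_le_arith_mean_weighted Finset.univ (fun _ : Fin n => 1 / (n : ℝ))
        (fun k => a k j ^ ((n : ℝ) * p) / W k ^ ((n : ℝ) * p))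
        (fun _ _ => by positivity) (by simp [hn'.ne'])
        (fun k _ => div_nonneg (Real.rpow_nonneg (ha k j) _) (Real.rpow_nonneg (hW k) _))
      refine le_trans (le_of_eq ?_) (mul_le_mul_of_nonneg_left this hP.le)
      rw [← Finset.prod_mul_distrib]
      refine Finset.prod_congr rfl fun k _ => ?_
      rw [← Real.div_rpow (ha k j) (hW k), ← Real.rpow_mul (div_nonneg (ha k j) (hW k))]
      have : (n : ℝ) * p * (1 / n) = p := by field_simp
      rw [this, ← Real.mul_rpow (hW k) (div_nonneg (ha k j) (hW k)),
        mul_div_cancel₀ _ (hz k)]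
    calc ∑ j, ∏ k, a k j ^ p
        ≤ ∑ j, (∏ k, W k ^ p) *
          ∑ k, (1 / (n : ℝ)) * (a k j ^ ((n : ℝ) * p) / W k ^ ((n : ℝ) * p)) :=
          Finset.sum_le_sum fun j _ => key j
      _ = (∏ k, W k ^ p) *
          ∑ k, (1 / (n : ℝ)) * ((∑ j, a k j ^ ((n : ℝ) * p)) / W k ^ ((n : ℝ) * p)) := by
          rw [← Finset.mul_sum, Finset.sum_comm]
          simp only [Finset.mul_sum, Finset.sum_div]
      _ ≤ (∏ k, W k ^ p) * ∑ k : Fin n, (1 / (n : ℝ)) * 1 := by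
          gcongr with k
          exact (div_le_one (Real.rpow_pos_of_pos (hWp k) _)).2 (h k)
      _ = ∏ k, W k ^ p := by simp [hn'.ne']

theorem le_weakLpNorm {𝕜 : Type*} [RCLike 𝕜] {E : Type*} [NormedAddCommGroup E]
    [NormedSpace 𝕜 E] {q : ℝ} (hq : 0 < q) {m : ℕ} (x : Fin m → E) (φ : E →L[𝕜] 𝕜)
    (hφ : ∀ z, ‖φ z‖ ≤ ‖z‖) :
    ∑ j, ‖φ (x j)‖ ^ q ≤ weakLpNorm 𝕜 q x ^ q := by
  have hb : BddAbove (Set.range fun φ : {φ : E →L[𝕜] 𝕜 // ‖φ‖ ≤ 1} =>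
      (∑ j, ‖φ.1 (x j)‖ ^ q) ^ (1 / q)) := by
    refine ⟨(∑ j, ‖x j‖ ^ q) ^ (1 / q), ?_⟩
    rintro _ ⟨ψ, rfl⟩
    have h1 : ∀ z, ‖ψ.1 z‖ ≤ ‖z‖ := fun z => by
      simpa using ψ.1.le_of_opNorm_le ψ.2 z
    dsimp only
    gcongr with j
    exact h1 _
  have h1 : ‖φ‖ ≤ 1 := φ.opNorm_le_bound zero_le_one (by simpa using hφ)
  have h2 : (∑ j, ‖φ (x j)‖ ^ q) ^ (1 / q) ≤ weakLpNorm 𝕜 q x := le_ciSup hb ⟨φ, h1⟩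
  have h3 : 0 ≤ ∑ j, ‖φ (x j)‖ ^ q := by positivity
  calc ∑ j, ‖φ (x j)‖ ^ q = ((∑ j, ‖φ (x j)‖ ^ q) ^ (1 / q)) ^ q := by
        rw [← Real.rpow_mul h3, one_div_mul_cancel hq.ne', Real.rpow_one]
    _ ≤ _ := by gcongr

theorem weakLpNorm_nonneg' {𝕜 : Type*} [RCLike 𝕜] {E : Type*} [NormedAddCommGroup E]
    [NormedSpace 𝕜 E] (q : ℝ) {m : ℕ} (x : Fin m → E) : 0 ≤ weakLpNorm 𝕜 q x :=
  Real.iSup_nonneg fun _ => by positivity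

theorem absSumming_aux {𝕜 : Type*} [RCLike 𝕜] {E : Type*}
    [NormedAddCommGroup E] [NormedSpace 𝕜 E]
    {F : Type*} [NormedAddCommGroup F]
    {n : ℕ} (hn : 0 < n) {p : ℝ} (hp : 0 < p)
    (T : (Fin n → E) → F) {C : ℝ} (hC : 0 ≤ C)
    (hT : SemiIntegralWith 𝕜 (E := fun _ : Fin n => E) p C T) (m : ℕ) (x : Fin n → Fin m → E) :
      (∑ j, ‖T (fun k => x k j)‖ ^ p) ^ (1 / p) ≤
        C * ∏ k, weakLpNorm 𝕜 ((n : ℝ) * p) (x k) := by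
  letI : MeasurableSpace (∀ _ : Fin n, {φ : WeakDual 𝕜 E // ∀ z, ‖φ z‖ ≤ ‖z‖}) := borel _
  haveI : BorelSpace (∀ _ : Fin n, {φ : WeakDual 𝕜 E // ∀ z, ‖φ z‖ ≤ ‖z‖}) := ⟨rfl⟩
  obtain ⟨μ, hμ, -, hx⟩ := hT
  have hnp : 0 < (n : ℝ) * p := by
    have : (0 : ℝ) < n := by exact_mod_cast hn
    positivity
  have hP : 0 ≤ ∏ k, weakLpNorm 𝕜 ((n : ℝ) * p) (x k) :=
    Finset.prod_nonneg fun k _ => weakLpNorm_nonneg' _ _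
  have hint : ∀ y : Fin n → E, Integrable (fun φ : (∀ _ : Fin n,
      {φ : WeakDual 𝕜 E // ∀ z, ‖φ z‖ ≤ ‖z‖}) => ∏ i, ‖(φ i).1 (y i)‖ ^ p) μ := by
    intro y
    have hc : Continuous (fun φ : (∀ _ : Fin n,
      {φ : WeakDual 𝕜 E // ∀ z, ‖φ z‖ ≤ ‖z‖}) => ∏ i, ‖(φ i).1 (y i)‖ ^ p) := by
      refine continuous_finsetProd _ fun i _ => ?_
      refine Continuous.rpow_const ?_ fun _ => Or.inr hp.le
      exact ((WeakDual.eval_continuous (y i)).comp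
        (continuous_subtype_val.comp (continuous_apply i))).norm
    refine Integrable.of_bound hc.measurable.aestronglyMeasurable (∏ i, ‖y i‖ ^ p)
      (Filter.Eventually.of_forall fun φ => ?_)
    rw [Real.norm_of_nonneg (by positivity)]
    gcongr with i
    exact (φ i).2 _
  have hsum : ∑ j, ∫ φ, ∏ i, ‖(φ i).1 (x i j)‖ ^ p ∂μ ≤
      ∏ k, weakLpNorm 𝕜 ((n : ℝ) * p) (x k) ^ p := by
    rw [← integral_finsetSum _ fun j _ => hint fun i => x i j]
    calc _ ≤ ∫ φ, ∏ k, weakLpNorm 𝕜 ((n : ℝ) * p) (x k) ^ p ∂μ := by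
          refine integral_mono (integrable_finsetSum _ fun j _ => hint fun i => x i j)
            (integrable_const _) fun φ => ?_
          exact holder_aux hn hp (fun i j => ‖(φ i).1 (x i j)‖) (fun _ _ => norm_nonneg _) _
            (fun k => weakLpNorm_nonneg' _ _)
            (fun k => le_weakLpNorm hnp (x k) (φ k).1 (φ k).2)
      _ = _ := by simp
  have hj : ∀ j, ‖T (fun k => x k j)‖ ^ p ≤ C ^ p * ∫ φ, ∏ i, ‖(φ i).1 (x i j)‖ ^ p ∂μ := by
    intro j
    have h0 : 0 ≤ ∫ φ, ∏ i, ‖(φ i).1 (x i j)‖ ^ p ∂μ :=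
      integral_nonneg fun φ => by positivity
    calc _ ≤ (C * (∫ φ, ∏ i, ‖(φ i).1 (x i j)‖ ^ p ∂μ) ^ (1 / p)) ^ p := by
          gcongr
          exact hx fun i => x i j
      _ = _ := by
          rw [Real.mul_rpow hC (by positivity), ← Real.rpow_mul h0,
            one_div_mul_cancel hp.ne', Real.rpow_one]
  have hfin : ∑ j, ‖T (fun k => x k j)‖ ^ p ≤
      (C * ∏ k, weakLpNorm 𝕜 ((n : ℝ) * p) (x k)) ^ p := by
    rw [Real.mul_rpow hC hP, ← Real.finsetProd_rpow _ _ fun k _ => weakLpNorm_nonneg' _ _]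
    refine (Finset.sum_le_sum fun j _ => hj j).trans ?_
    rw [← Finset.mul_sum]
    gcongr
  calc _ ≤ ((C * ∏ k, weakLpNorm 𝕜 ((n : ℝ) * p) (x k)) ^ p) ^ (1 / p) := by gcongr
    _ = _ := by
      rw [← Real.rpow_mul (mul_nonneg hC hP), mul_one_div_cancel hp.ne', Real.rpow_one]

/-- Every `p`-semi-integral continuous `n`-linear map (`n ≥ 2`) is
absolutely `(p; np,…,np)`-summing with constant `‖T‖_{si,p}` (hence `np`-dominated). -/
theorem absSumming_np_of_semiIntegral {𝕜 : Type*} [RCLike 𝕜] {E : Type*}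
    [NormedAddCommGroup E] [NormedSpace 𝕜 E] [CompleteSpace E]
    {F : Type*} [NormedAddCommGroup F] [NormedSpace 𝕜 F] [CompleteSpace F]
    {n : ℕ} (hn : 2 ≤ n) {p : ℝ} (hp : 0 < p)
    (T : ContinuousMultilinearMap 𝕜 (fun _ : Fin n => E) F)
    (hT : ∃ C, 0 ≤ C ∧ SemiIntegralWith 𝕜 p C ⇑T) :
    ∀ (m : ℕ) (x : Fin n → Fin m → E),
      (∑ j, ‖T (fun k => x k j)‖ ^ p) ^ (1 / p) ≤
        siNorm 𝕜 p ⇑T * ∏ k, weakLpNorm 𝕜 ((n : ℝ) * p) (x k) := by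
  intro m x
  have hP : 0 ≤ ∏ k, weakLpNorm 𝕜 ((n : ℝ) * p) (x k) :=
    Finset.prod_nonneg fun k _ => weakLpNorm_nonneg' _ _
  have key : ∀ C, 0 ≤ C → SemiIntegralWith 𝕜 p C ⇑T → _ := fun C h0 h =>
    absSumming_aux (by omega) hp (⇑T) h0 h m x
  rcases hP.eq_or_lt with h | h
  · obtain ⟨C, h0, hC⟩ := hT
    have := key C h0 hC
    rw [← h] at this ⊢
    simpa using this
  · rw [← div_le_iff₀ h]
    refine le_csInf hT ?_
    rintro C ⟨h0, hC⟩
    rw [div_le_iff₀ h]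
    exact key C h0 hC
end

section
/- Let E, F be Banach spaces, n ≥ 2 and 0 < p < ∞. Every p-semi-integral continuous n-linear map T : E × ⋯ × E → F is fully (multiple) p-summing, with ‖T‖_{fas,p} ≤ ‖T‖_{si,p}: for every m ∈ ℕ and all finite families x_j^{(k)} ∈ E, (∑_{j_1, …, j_n = 1}^m ‖T(x_{j_1}^{(1)}, …, x_{j_n}^{(n)})‖^p)^{1/p} ≤ ‖T‖_{si,p} ∏_{k=1}^n ‖(x_j^{(k)})_{j=1}^m‖_{w,p}. -/
open MeasureTheory

theorem weakLp_aux {𝕜 : Type*} [RCLike 𝕜] {E : Type*}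
    [NormedAddCommGroup E] [NormedSpace 𝕜 E] {p : ℝ} (hp : 0 < p) {m : ℕ} (x : Fin m → E)
    (φ : WeakDual 𝕜 E) (hφ : ∀ z, ‖φ z‖ ≤ ‖z‖) :
    ∑ j, ‖φ (x j)‖ ^ p ≤ (weakLpNorm 𝕜 p x) ^ p := by
  have hb : BddAbove (Set.range fun φ : {φ : E →L[𝕜] 𝕜 // ‖φ‖ ≤ 1} =>
      (∑ j, ‖φ.1 (x j)‖ ^ p) ^ (1 / p)) := by
    refine ⟨(∑ j, ‖x j‖ ^ p) ^ (1 / p), ?_⟩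
    rintro _ ⟨ψ, rfl⟩
    have h1 : ∀ z, ‖ψ.1 z‖ ≤ ‖z‖ := fun z => by
      simpa using ψ.1.le_of_opNorm_le ψ.2 z
    refine Real.rpow_le_rpow (Finset.sum_nonneg fun j _ => by positivity)
      (Finset.sum_le_sum fun j _ => ?_) (by positivity)
    exact Real.rpow_le_rpow (norm_nonneg _) (h1 _) hp.le
  have hn : ‖WeakDual.toStrongDual φ‖ ≤ 1 :=
    ContinuousLinearMap.opNorm_le_bound _ zero_le_one fun z => by simpa using hφ z
  have h := le_ciSup hb ⟨WeakDual.toStrongDual φ, hn⟩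
  have h0 : 0 ≤ ∑ j, ‖φ (x j)‖ ^ p := Finset.sum_nonneg fun j _ => by positivity
  have h2 : (∑ j, ‖φ (x j)‖ ^ p) ^ (1 / p) ≤ weakLpNorm 𝕜 p x := h
  have h3 := Real.rpow_le_rpow (by positivity) h2 hp.le
  rwa [← Real.rpow_mul h0, one_div_mul_cancel hp.ne', Real.rpow_one] at h3

theorem weakLp_nonneg {𝕜 : Type*} [RCLike 𝕜] {E : Type*}
    [NormedAddCommGroup E] [NormedSpace 𝕜 E] {p : ℝ} {m : ℕ} (x : Fin m → E) :
    0 ≤ weakLpNorm 𝕜 p x :=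
  Real.iSup_nonneg fun φ => Real.rpow_nonneg (Finset.sum_nonneg fun j _ => by positivity) _

theorem semi_aux {𝕜 : Type*} [RCLike 𝕜] {E : Type*}
    [NormedAddCommGroup E] [NormedSpace 𝕜 E]
    {F : Type*} [NormedAddCommGroup F]
    {n : ℕ} {p : ℝ} (hp : 0 < p) (T : (Fin n → E) → F) {C : ℝ} (hC : 0 ≤ C)
    (hT : SemiIntegralWith 𝕜 p C T) (m : ℕ) (x : Fin n → Fin m → E) :
    (∑ j : Fin n → Fin m, ‖T (fun i => x i (j i))‖ ^ p) ^ (1 / p) ≤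
        C * ∏ k, weakLpNorm 𝕜 p (x k) := by
  letI : MeasurableSpace (∀ _ : Fin n, {φ : WeakDual 𝕜 E // ∀ z, ‖φ z‖ ≤ ‖z‖}) := borel _
  haveI : BorelSpace (∀ _ : Fin n, {φ : WeakDual 𝕜 E // ∀ z, ‖φ z‖ ≤ ‖z‖}) := ⟨rfl⟩
  obtain ⟨μ, hμ, -, h⟩ := hT
  have hP : 0 ≤ ∏ k, weakLpNorm 𝕜 p (x k) := Finset.prod_nonneg fun k _ => weakLp_nonneg _
  have hint : ∀ y : Fin n → E, Integrable
      (fun φ : (∀ _ : Fin n, {φ : WeakDual 𝕜 E // ∀ z, ‖φ z‖ ≤ ‖z‖}) =>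
        ∏ i, ‖(φ i).1 (y i)‖ ^ p) μ := by
    intro y
    have hc : Continuous
      (fun φ : (∀ _ : Fin n, {φ : WeakDual 𝕜 E // ∀ z, ‖φ z‖ ≤ ‖z‖}) =>
        ∏ i, ‖(φ i).1 (y i)‖ ^ p) := by
      refine continuous_finsetProd _ fun i _ => ?_
      refine Continuous.rpow_const ?_ fun _ => Or.inr hp.le
      exact ((WeakDual.eval_continuous (y i)).comp
        (continuous_subtype_val.comp (continuous_apply i))).norm
    refine Integrable.of_bound hc.measurable.aestronglyMeasurable (∏ i, ‖y i‖ ^ p) ?_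
    refine Filter.Eventually.of_forall fun φ => ?_
    rw [Real.norm_of_nonneg (by positivity)]
    exact Finset.prod_le_prod (fun i _ => by positivity) fun i _ =>
      Real.rpow_le_rpow (norm_nonneg _) ((φ i).2 _) hp.le
  have hterm : ∀ y : Fin n → E, ‖T y‖ ^ p ≤ C ^ p * ∫ φ, ∏ i, ‖(φ i).1 (y i)‖ ^ p ∂μ := by
    intro y
    have h0 : 0 ≤ ∫ φ, ∏ i, ‖(φ i).1 (y i)‖ ^ p ∂μ :=
      integral_nonneg fun φ => by positivity
    have h3 := Real.rpow_le_rpow (norm_nonneg _) (h y) hp.le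
    rwa [Real.mul_rpow hC (by positivity), ← Real.rpow_mul h0, one_div_mul_cancel hp.ne',
      Real.rpow_one] at h3
  have hsum : ∑ j : Fin n → Fin m, ‖T (fun i => x i (j i))‖ ^ p ≤
      (C * ∏ k, weakLpNorm 𝕜 p (x k)) ^ p := by
    calc _ ≤ ∑ j : Fin n → Fin m, C ^ p * ∫ φ, ∏ i, ‖(φ i).1 (x i (j i))‖ ^ p ∂μ :=
          Finset.sum_le_sum fun j _ => hterm _
      _ = C ^ p * ∫ φ, ∑ j : Fin n → Fin m, ∏ i, ‖(φ i).1 (x i (j i))‖ ^ p ∂μ := by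
          rw [integral_finsetSum _ fun j _ => hint _, Finset.mul_sum]
      _ ≤ C ^ p * ∫ φ, ∏ k, (weakLpNorm 𝕜 p (x k)) ^ p ∂μ := by
          refine mul_le_mul_of_nonneg_left ?_ (by positivity)
          refine integral_mono (integrable_finsetSum _ fun j _ => hint _)
            (integrable_const _) fun φ => ?_
          simp only
          rw [← Fintype.prod_sum (fun i j => ‖(φ i).1 (x i j)‖ ^ p)]
          exact Finset.prod_le_prod (fun i _ => Finset.sum_nonneg fun j _ => by positivity)
            fun i _ => weakLp_aux hp (x i) _ (φ i).2
      _ = _ := by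
          rw [Real.mul_rpow hC hP, Real.finset_prod_rpow _ _ fun k _ => weakLp_nonneg _]
          simp
  have h4 := Real.rpow_le_rpow (Finset.sum_nonneg fun j _ => by positivity) hsum
    (by positivity : 0 ≤ 1 / p)
  rwa [← Real.rpow_mul (by positivity), mul_one_div_cancel hp.ne', Real.rpow_one] at h4

/-- Every `p`-semi-integral continuous `n`-linear map (`n ≥ 2`) is fully
(multiple) `p`-summing, with `‖T‖_{fas,p} ≤ ‖T‖_{si,p}`. -/
theorem fullySumming_of_semiIntegral {𝕜 : Type*} [RCLike 𝕜] {E : Type*}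
    [NormedAddCommGroup E] [NormedSpace 𝕜 E] [CompleteSpace E]
    {F : Type*} [NormedAddCommGroup F] [NormedSpace 𝕜 F] [CompleteSpace F]
    {n : ℕ} (hn : 2 ≤ n) {p : ℝ} (hp : 0 < p)
    (T : ContinuousMultilinearMap 𝕜 (fun _ : Fin n => E) F)
    (hT : ∃ C, 0 ≤ C ∧ SemiIntegralWith 𝕜 p C ⇑T) :
    ∀ (m : ℕ) (x : Fin n → Fin m → E),
      (∑ j : Fin n → Fin m, ‖T (fun i => x i (j i))‖ ^ p) ^ (1 / p) ≤
        siNorm 𝕜 p ⇑T * ∏ k, weakLpNorm 𝕜 p (x k) := by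
  intro m x
  obtain ⟨C₀, hC₀, hT₀⟩ := hT
  have hP : 0 ≤ ∏ k, weakLpNorm 𝕜 p (x k) := Finset.prod_nonneg fun k _ => weakLp_nonneg _
  rcases hP.eq_or_lt with h | h
  · have := semi_aux hp _ hC₀ hT₀ m x
    rw [← h, mul_zero] at this ⊢
    exact this
  · rw [← div_le_iff₀ h]
    refine le_csInf ⟨C₀, hC₀, hT₀⟩ ?_
    rintro C ⟨hC, hTC⟩
    rw [div_le_iff₀ h]
    exact semi_aux hp _ hC hTC m x
end

section
/- Let E, F be Banach spaces, n ≥ 2 and 0 < p < ∞. Every fully (multiple) p-summing continuous n-linear map T : E × ⋯ × E → F is absolutely p-summing at every point: for every (a_1, …, a_n) ∈ E × ⋯ × E and all weakly p-summable sequences (x_j^{(k)})_{j=1}^∞ in E (k = 1, …, n), one has ∑_{j=1}^∞ ‖T(a_1 + x_j^{(1)}, …, a_n + x_j^{(n)}) − T(a_1, …, a_n)‖^p < ∞. -/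
open MeasureTheory

theorem aux_sub_rpow {p : ℝ} (hp : 0 < p) {a b c : ℝ} (ha : 0 ≤ a) (hb : 0 ≤ b) (hc : 0 ≤ c)
    (h : c ≤ a + b) : c ^ p ≤ 2 ^ p * (a ^ p + b ^ p) := by
  have h2 : c ≤ 2 * max a b := by
    have := le_max_left a b
    have := le_max_right a b
    linarith
  have h3 : c ^ p ≤ 2 ^ p * (max a b) ^ p := by
    rw [← Real.mul_rpow (by norm_num) (le_max_of_le_left ha)]
    exact Real.rpow_le_rpow hc h2 hp.le
  refine h3.trans (mul_le_mul_of_nonneg_left ?_ (by positivity))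
  have h4 := Real.rpow_nonneg ha p
  have h5 := Real.rpow_nonneg hb p
  rcases max_choice a b with h | h <;> rw [h] <;> linarith

theorem aux_weak_bound {𝕜 : Type*} [RCLike 𝕜] {E : Type*}
    [NormedAddCommGroup E] [NormedSpace 𝕜 E] {p : ℝ} (hp : 0 < p) (x : ℕ → E)
    (h : ∀ φ : E →L[𝕜] 𝕜, Summable fun j => ‖φ (x j)‖ ^ p) :
    ∃ K : ℝ, 0 ≤ K ∧ ∀ φ : E →L[𝕜] 𝕜, ‖φ‖ ≤ 1 → ∀ m : ℕ,
      ∑ j : Fin m, ‖φ (x j)‖ ^ p ≤ K := by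
  obtain ⟨N, φ₀, hφ₀⟩ := nonempty_interior_of_iUnion_of_closed
    (f := fun N : ℕ => {φ : E →L[𝕜] 𝕜 | ∀ m : ℕ, ∑ j : Fin m, ‖φ (x j)‖ ^ p ≤ N}) (by
      intro N
      simp only [Set.ofPred_forall]
      refine isClosed_iInter fun m => isClosed_le ?_ continuous_const
      refine continuous_finsetSum _ fun j _ => ?_
      refine Continuous.rpow_const ?_ (fun _ => Or.inr hp.le)
      fun_prop) (by
      ext φ
      simp only [Set.mem_iUnion, Set.mem_ofPred_eq, Set.mem_univ, iff_true]
      obtain ⟨N, hN⟩ := exists_nat_ge (∑' j, ‖φ (x j)‖ ^ p)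
      refine ⟨N, fun m => le_trans ?_ hN⟩
      rw [Fin.sum_univ_eq_sum_range (fun j => ‖φ (x j)‖ ^ p) m]
      exact (h φ).sum_le_tsum _ (fun j _ => by positivity))
  have hmem := interior_subset hφ₀
  rw [mem_interior_iff_mem_nhds, Metric.mem_nhds_iff] at hφ₀
  obtain ⟨r, hr, hball⟩ := hφ₀
  refine ⟨(2 / r) ^ p * (2 ^ p * (N + N)), by positivity, fun φ hφ m => ?_⟩
  have hψ := hball (show φ₀ + ((r / 2 : ℝ) : 𝕜) • φ ∈ Metric.ball φ₀ r by
    rw [mem_ball_iff_norm, add_sub_cancel_left, norm_smul, RCLike.norm_ofReal,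
      abs_of_pos (by positivity)]
    nlinarith) m
  have h0 := hmem m
  set ψ := φ₀ + ((r / 2 : ℝ) : 𝕜) • φ with hψdef
  have key : ∀ j : Fin m, ‖φ (x j)‖ ^ p ≤
      (2 / r) ^ p * (2 ^ p * (‖ψ (x j)‖ ^ p + ‖φ₀ (x j)‖ ^ p)) := by
    intro j
    have e : ‖φ (x j)‖ = (2 / r) * ‖ψ (x j) - φ₀ (x j)‖ := by
      have : ψ (x j) - φ₀ (x j) = ((r / 2 : ℝ) : 𝕜) * φ (x j) := by
        simp [hψdef]
      rw [this, norm_mul, RCLike.norm_ofReal, abs_of_pos (by positivity)]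
      field_simp
    rw [e, Real.mul_rpow (by positivity) (norm_nonneg _)]
    refine mul_le_mul_of_nonneg_left ?_ (by positivity)
    exact aux_sub_rpow hp (norm_nonneg _) (norm_nonneg _) (norm_nonneg _) (norm_sub_le _ _)
  refine (Finset.sum_le_sum fun j _ => key j).trans ?_
  rw [← Finset.mul_sum, ← Finset.mul_sum, Finset.sum_add_distrib]
  gcongr

theorem aux_sum_rpow {ι : Type*} {p : ℝ} (hp : 0 < p) (s : Finset ι) (f : ι → ℝ)
    (hf : ∀ i, 0 ≤ f i) :
    (∑ i ∈ s, f i) ^ p ≤ (s.card : ℝ) ^ p * ∑ i ∈ s, f i ^ p := by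
  rcases s.eq_empty_or_nonempty with rfl | hs
  · simp [Real.zero_rpow hp.ne']
  obtain ⟨i, hi, hmax⟩ := s.exists_max_image f hs
  have h1 : ∑ j ∈ s, f j ≤ s.card * f i := by
    simpa using Finset.sum_le_card_nsmul s f (f i) hmax
  calc (∑ i ∈ s, f i) ^ p ≤ (s.card * f i) ^ p :=
        Real.rpow_le_rpow (Finset.sum_nonneg fun i _ => hf i) h1 hp.le
    _ = (s.card : ℝ) ^ p * f i ^ p := Real.mul_rpow (by positivity) (hf i)
    _ ≤ _ := by
        refine mul_le_mul_of_nonneg_left ?_ (by positivity)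
        exact Finset.single_le_sum (f := fun i => f i ^ p)
          (fun j _ => Real.rpow_nonneg (hf j) p) hi

/-- Every fully (multiple) `p`-summing continuous `n`-linear map (`n ≥ 2`)
is absolutely `p`-summing at every point: for every point `(a₁,…,aₙ)` and all weakly
`p`-summable sequences `(xⱼ⁽ᵏ⁾)ⱼ`, the series
`∑ⱼ ‖T(a₁ + xⱼ⁽¹⁾, …, aₙ + xⱼ⁽ⁿ⁾) − T(a₁,…,aₙ)‖^p` converges. -/
theorem absSummingEverywhere_of_fullySumming {𝕜 : Type*} [RCLike 𝕜] {E : Type*}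
    [NormedAddCommGroup E] [NormedSpace 𝕜 E] [CompleteSpace E]
    {F : Type*} [NormedAddCommGroup F] [NormedSpace 𝕜 F] [CompleteSpace F]
    {n : ℕ} (hn : 2 ≤ n) {p : ℝ} (hp : 0 < p)
    (T : ContinuousMultilinearMap 𝕜 (fun _ : Fin n => E) F)
    (hT : ∃ C, 0 ≤ C ∧ ∀ (m : ℕ) (x : Fin n → Fin m → E),
      (∑ j : Fin n → Fin m, ‖T (fun i => x i (j i))‖ ^ p) ^ (1 / p) ≤
        C * ∏ k, weakLpNorm 𝕜 p (x k)) :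
    ∀ (a : Fin n → E) (x : Fin n → ℕ → E),
      (∀ k, ∀ φ : E →L[𝕜] 𝕜, Summable fun j => ‖φ (x k j)‖ ^ p) →
      Summable fun j => ‖T (fun i => a i + x i j) - T a‖ ^ p := by
  obtain ⟨C, hC, hT⟩ := hT
  intro a x hx
  obtain ⟨y, hy0, hy1⟩ : ∃ y : Fin n → ℕ → E, (∀ k, y k 0 = a k) ∧ ∀ k j, y k (j + 1) = x k j :=
    ⟨fun k j => Nat.casesOn j (a k) (x k), fun _ => rfl, fun _ _ => rfl⟩
  have hyw : ∀ k, ∀ φ : E →L[𝕜] 𝕜, Summable fun j => ‖φ (y k j)‖ ^ p := by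
    intro k φ
    rw [← summable_nat_add_iff 1]
    simpa only [hy1] using hx k φ
  choose K hK0 hK using fun k => aux_weak_bound hp (y k) (hyw k)
  have hw : ∀ k (m : ℕ), weakLpNorm 𝕜 p (fun j : Fin m => y k j) ≤ K k ^ (1 / p) := by
    intro k m
    refine Real.iSup_le (fun φ => ?_) (Real.rpow_nonneg (hK0 k) _)
    exact Real.rpow_le_rpow (Finset.sum_nonneg fun j _ => by positivity) (hK k φ.1 φ.2 m)
      (by positivity)
  have hw0 : ∀ k (m : ℕ), 0 ≤ weakLpNorm 𝕜 p (fun j : Fin m => y k j) := by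
    intro k m
    exact Real.iSup_nonneg fun φ => by positivity
  obtain ⟨B, hB⟩ : ∃ B : ℝ, B = C * ∏ k, K k ^ (1 / p) := ⟨_, rfl⟩
  have hsum : ∀ m : ℕ, ∑ j : Fin n → Fin m, ‖T (fun i => y i (j i))‖ ^ p ≤ B ^ p := by
    intro m
    have h1 : (∑ j : Fin n → Fin m, ‖T (fun i => y i (j i))‖ ^ p) ^ (1 / p) ≤ B := hB ▸
      (hT m (fun i j => y i j)).trans (mul_le_mul_of_nonneg_left
        (Finset.prod_le_prod (fun k _ => hw0 k m) fun k _ => hw k m) hC)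
    have h0 : 0 ≤ ∑ j : Fin n → Fin m, ‖T (fun i => y i (j i))‖ ^ p :=
      Finset.sum_nonneg fun j _ => by positivity
    have h2 := Real.rpow_le_rpow (Real.rpow_nonneg h0 _) h1 hp.le
    rwa [← Real.rpow_mul h0, one_div_mul_cancel hp.ne', Real.rpow_one] at h2
  have hs : ∀ s : Finset (Fin n), s.Nonempty →
      Summable fun j => ‖T (s.piecewise (fun i => x i j) a)‖ ^ p := by
    intro s ⟨i₀, hi₀⟩
    refine summable_of_sum_range_le (c := B ^ p) (fun j => by positivity) fun m => ?_
    refine le_trans ?_ (hsum (m + 1))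
    rw [← Fin.sum_univ_eq_sum_range
      (fun j => ‖T (s.piecewise (fun i => x i j) a)‖ ^ p) m]
    let e : Fin m → (Fin n → Fin (m + 1)) := fun j i => if i ∈ s then j.succ else 0
    have he : Function.Injective e := by
      intro j j' h
      have := congrFun h i₀
      simpa [e, hi₀] using this
    have hval : ∀ j : Fin m, ‖T (s.piecewise (fun i => x i j) a)‖ ^ p =
        (fun q : Fin n → Fin (m + 1) => ‖T (fun i => y i (q i))‖ ^ p) (e j) := by
      intro j
      have : s.piecewise (fun i => x i j) a = fun i => y i (e j i) := by
        funext i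
        by_cases hi : i ∈ s <;> simp [e, hi, hy0, hy1]
      simp only [this]
    rw [Finset.sum_congr rfl fun j _ => hval j,
      ← Finset.sum_image (s := Finset.univ) (g := e)
        (f := fun q : Fin n → Fin (m + 1) => ‖T (fun i => y i (q i))‖ ^ p) he.injOn]
    exact Finset.sum_le_sum_of_subset_of_nonneg (Finset.subset_univ _)
      fun q _ _ => by positivity
  obtain ⟨S, hS⟩ : ∃ S : Finset (Finset (Fin n)), S = Finset.univ.erase ∅ := ⟨_, rfl⟩
  have hdiff : ∀ j, T (fun i => a i + x i j) - T a =
      ∑ s ∈ S, T (s.piecewise (fun i => x i j) a) := by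
    intro j
    have h1 := T.map_add_univ (fun i => x i j) a
    have h2 : (fun i => a i + x i j) = (fun i => x i j) + a := by
      funext i
      simp [add_comm]
    rw [h2, h1, ← Finset.add_sum_erase _ _ (Finset.mem_univ ∅)]
    simp [hS]
  have hsumm : Summable fun j => ∑ s ∈ S, ‖T (s.piecewise (fun i => x i j) a)‖ ^ p := by
    refine summable_sum fun s hsS => hs s ?_
    rw [hS] at hsS
    exact Finset.nonempty_iff_ne_empty.2 (Finset.ne_of_mem_erase hsS)
  refine Summable.of_nonneg_of_le (fun j => Real.rpow_nonneg (norm_nonneg _) p) (fun j => ?_)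
    (hsumm.mul_left ((S.card : ℝ) ^ p))
  rw [hdiff j]
  have h1 := Real.rpow_le_rpow (norm_nonneg _)
    (norm_sum_le S fun s => T (s.piecewise (fun i => x i j) a)) hp.le
  have h2 := aux_sum_rpow hp S (fun s => ‖T (s.piecewise (fun i => x i j) a)‖)
    (fun _ => norm_nonneg _)
  exact h1.trans h2
end

section
/- Let E, F be Banach spaces, n ≥ 2 and 0 < p < ∞. Every p-semi-integral continuous n-linear map T : E × ⋯ × E → F is strongly p-summing; indeed, for every m ∈ ℕ and all finite families x_j^{(k)} ∈ E, (∑_{j=1}^m ‖T(x_j^{(1)}, …, x_j^{(n)})‖^p)^{1/p} ≤ ‖T‖_{si,p} · sup_{φ ∈ B} (∑_{j=1}^m |φ(x_j^{(1)}, …, x_j^{(n)})|^p)^{1/p}, where B is the closed unit ball of the space of continuous n-linear forms on E × ⋯ × E. -/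
open MeasureTheory

theorem aux_le_of_semiIntegralWith {𝕜 : Type*} [RCLike 𝕜] {E : Type*}
    [NormedAddCommGroup E] [NormedSpace 𝕜 E]
    {F : Type*} [NormedAddCommGroup F] [NormedSpace 𝕜 F]
    {n : ℕ} {p : ℝ} (hp : 0 < p)
    (T : ContinuousMultilinearMap 𝕜 (fun _ : Fin n => E) F) (C : ℝ) (hC : 0 ≤ C)
    (hT : SemiIntegralWith 𝕜 p C ⇑T) (m : ℕ) (x : Fin n → Fin m → E) (S : ℝ) (hS0 : 0 ≤ S)
    (hS : ∀ φ : ContinuousMultilinearMap 𝕜 (fun _ : Fin n => E) 𝕜, ‖φ‖ ≤ 1 →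
      (∑ j, ‖φ (fun i => x i j)‖ ^ p) ^ (1 / p) ≤ S) :
    (∑ j, ‖T (fun i => x i j)‖ ^ p) ^ (1 / p) ≤ C * S := by
  letI : MeasurableSpace (∀ _ : Fin n, {φ : WeakDual 𝕜 E // ∀ z, ‖φ z‖ ≤ ‖z‖}) := borel _
  haveI : BorelSpace (∀ _ : Fin n, {φ : WeakDual 𝕜 E // ∀ z, ‖φ z‖ ≤ ‖z‖}) := ⟨rfl⟩
  obtain ⟨μ, hμ, -, h⟩ := hT
  haveI : IsProbabilityMeasure μ := hμ
  have hnn : ∀ (j : Fin m) (φ : ∀ _ : Fin n, {φ : WeakDual 𝕜 E // ∀ z, ‖φ z‖ ≤ ‖z‖}),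
      0 ≤ ∏ i, ‖(φ i).1 (x i j)‖ ^ p := fun j φ =>
    Finset.prod_nonneg fun i _ => Real.rpow_nonneg (norm_nonneg _) _
  have hint : ∀ j : Fin m, Integrable
      (fun φ : ∀ _ : Fin n, {φ : WeakDual 𝕜 E // ∀ z, ‖φ z‖ ≤ ‖z‖} =>
        ∏ i, ‖(φ i).1 (x i j)‖ ^ p) μ := by
    intro j
    have hcont : Continuous
        (fun φ : ∀ _ : Fin n, {φ : WeakDual 𝕜 E // ∀ z, ‖φ z‖ ≤ ‖z‖} =>
        ∏ i, ‖(φ i).1 (x i j)‖ ^ p) := by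
      refine continuous_finsetProd _ fun i _ => ?_
      refine Continuous.rpow_const ?_ fun _ => Or.inr hp.le
      exact ((WeakDual.eval_continuous (x i j)).comp
        (continuous_subtype_val.comp (continuous_apply i))).norm
    refine Integrable.of_bound hcont.measurable.aestronglyMeasurable
      (∏ i, ‖x i j‖ ^ p) (Filter.Eventually.of_forall fun φ => ?_)
    rw [Real.norm_of_nonneg (hnn j φ)]
    exact Finset.prod_le_prod (fun i _ => Real.rpow_nonneg (norm_nonneg _) _)
      fun i _ => Real.rpow_le_rpow (norm_nonneg _) ((φ i).2 _) hp.le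
  have hpt : ∀ φ : ∀ _ : Fin n, {φ : WeakDual 𝕜 E // ∀ z, ‖φ z‖ ≤ ‖z‖},
      ∑ j, ∏ i, ‖(φ i).1 (x i j)‖ ^ p ≤ S ^ p := by
    intro φ
    let Φ : ContinuousMultilinearMap 𝕜 (fun _ : Fin n => E) 𝕜 :=
      (ContinuousMultilinearMap.mkPiAlgebra 𝕜 (Fin n) 𝕜).compContinuousLinearMap
        (fun i => WeakDual.toStrongDual (φ i).1)
    have hΦ : ∀ y : Fin n → E, Φ y = ∏ i, (φ i).1 (y i) := fun y => rfl
    have hΦn : ‖Φ‖ ≤ 1 := by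
      refine ContinuousMultilinearMap.opNorm_le_bound zero_le_one fun y => ?_
      rw [hΦ, norm_prod, one_mul]
      exact Finset.prod_le_prod (fun i _ => norm_nonneg _) fun i _ => (φ i).2 _
    have h1 := hS Φ hΦn
    rw [one_div, Real.rpow_inv_le_iff_of_pos
      (Finset.sum_nonneg fun j _ => Real.rpow_nonneg (norm_nonneg _) _) hS0 hp] at h1
    refine le_trans (le_of_eq ?_) h1
    refine Finset.sum_congr rfl fun j _ => ?_
    rw [hΦ, norm_prod, Real.finsetProd_rpow _ _ fun i _ => norm_nonneg _]
  rw [one_div, Real.rpow_inv_le_iff_of_pos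
      (Finset.sum_nonneg fun j _ => Real.rpow_nonneg (norm_nonneg _) _)
      (mul_nonneg hC hS0) hp, Real.mul_rpow hC hS0]
  calc ∑ j, ‖T (fun i => x i j)‖ ^ p
      ≤ ∑ j, C ^ p * ∫ φ, ∏ i, ‖(φ i).1 (x i j)‖ ^ p ∂μ := by
        refine Finset.sum_le_sum fun j _ => ?_
        have hI : 0 ≤ ∫ φ, ∏ i, ‖(φ i).1 (x i j)‖ ^ p ∂μ := integral_nonneg (hnn j)
        have h2 := Real.rpow_le_rpow (norm_nonneg _) (h fun i => x i j) hp.le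
        rwa [Real.mul_rpow hC (Real.rpow_nonneg hI _), one_div,
          Real.rpow_inv_rpow hI hp.ne'] at h2
    _ = C ^ p * ∫ φ, ∑ j, ∏ i, ‖(φ i).1 (x i j)‖ ^ p ∂μ := by
        rw [← Finset.mul_sum, integral_finsetSum _ fun j _ => hint j]
    _ ≤ C ^ p * S ^ p := by
        refine mul_le_mul_of_nonneg_left ?_ (Real.rpow_nonneg hC _)
        calc _ ≤ ∫ _, S ^ p ∂μ :=
              integral_mono (integrable_finsetSum _ fun j _ => hint j)
                (integrable_const _) hpt
          _ = S ^ p := by simp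

/-- Every `p`-semi-integral continuous `n`-linear map (`n ≥ 2`) is strongly
`p`-summing, with constant `‖T‖_{si,p}`: the right-hand side is the sup over the closed unit
ball of the space of continuous `n`-linear forms. -/
theorem stronglySumming_of_semiIntegral {𝕜 : Type*} [RCLike 𝕜] {E : Type*}
    [NormedAddCommGroup E] [NormedSpace 𝕜 E] [CompleteSpace E]
    {F : Type*} [NormedAddCommGroup F] [NormedSpace 𝕜 F] [CompleteSpace F]
    {n : ℕ} (hn : 2 ≤ n) {p : ℝ} (hp : 0 < p)
    (T : ContinuousMultilinearMap 𝕜 (fun _ : Fin n => E) F)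
    (hT : ∃ C, 0 ≤ C ∧ SemiIntegralWith 𝕜 p C ⇑T) :
    ∀ (m : ℕ) (x : Fin n → Fin m → E),
      (∑ j, ‖T (fun i => x i j)‖ ^ p) ^ (1 / p) ≤
        siNorm 𝕜 p ⇑T *
          ⨆ φ : {φ : ContinuousMultilinearMap 𝕜 (fun _ : Fin n => E) 𝕜 // ‖φ‖ ≤ 1},
            (∑ j, ‖φ.1 (fun i => x i j)‖ ^ p) ^ (1 / p) := by
  intro m x
  set f : {φ : ContinuousMultilinearMap 𝕜 (fun _ : Fin n => E) 𝕜 // ‖φ‖ ≤ 1} → ℝ :=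
    fun φ => (∑ j, ‖φ.1 (fun i => x i j)‖ ^ p) ^ (1 / p) with hf
  have hf0 : ∀ φ, 0 ≤ f φ := fun φ => Real.rpow_nonneg
    (Finset.sum_nonneg fun j _ => Real.rpow_nonneg (norm_nonneg _) _) _
  have hbdd : BddAbove (Set.range f) := by
    refine ⟨(∑ j, (∏ i, ‖x i j‖) ^ p) ^ (1 / p), ?_⟩
    rintro _ ⟨φ, rfl⟩
    refine Real.rpow_le_rpow
      (Finset.sum_nonneg fun j _ => Real.rpow_nonneg (norm_nonneg _) _) ?_ (by positivity)
    refine Finset.sum_le_sum fun j _ => Real.rpow_le_rpow (norm_nonneg _) ?_ hp.le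
    refine (φ.1.le_opNorm _).trans ?_
    exact mul_le_of_le_one_left (Finset.prod_nonneg fun i _ => norm_nonneg _) φ.2
  have hS0 : 0 ≤ ⨆ φ, f φ := Real.iSup_nonneg hf0
  have key : ∀ C, 0 ≤ C → SemiIntegralWith 𝕜 p C ⇑T →
      (∑ j, ‖T (fun i => x i j)‖ ^ p) ^ (1 / p) ≤ C * ⨆ φ, f φ := fun C hC h =>
    aux_le_of_semiIntegralWith hp T C hC h m x _ hS0 fun φ hφ => le_ciSup hbdd ⟨φ, hφ⟩
  rcases hS0.eq_or_lt with h0 | hpos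
  · obtain ⟨C, hC, h⟩ := hT
    have := key C hC h
    rw [← h0] at this ⊢
    simpa using this
  · rw [← div_le_iff₀ hpos]
    refine le_csInf hT ?_
    rintro C ⟨hC, h⟩
    rw [div_le_iff₀ hpos]
    exact key C hC h
end

section
/- Let E be a Banach space, n ≥ 2 and 0 < p < ∞. Every continuous n-linear map from E × ⋯ × E into E is strongly fully p-summing if and only if E is finite-dimensional. -/
open MeasureTheory

lemma dr_step {𝕜 : Type*} [RCLike 𝕜] {E : Type*} [NormedAddCommGroup E] [NormedSpace 𝕜 E]
    {N k : ℕ} (hk : 2 * k < N) (u : EuclideanSpace 𝕜 (Fin N) →L[𝕜] E) (hu : ‖u‖ ≤ 1)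
    (hmax : ∀ D : EuclideanSpace 𝕜 (Fin N) →L[𝕜] EuclideanSpace 𝕜 (Fin N),
      ‖u.comp D‖ ≤ 1 → ‖D.det‖ ≤ 1)
    (b : OrthonormalBasis (Fin N) 𝕜 (EuclideanSpace 𝕜 (Fin N))) :
    ∃ x, (∀ i : Fin N, (i : ℕ) < k → inner 𝕜 (b i) x = 0) ∧ ‖x‖ = 1 ∧ 1 / 4 ≤ ‖u x‖ := by
  classical
  by_contra! hcon
  set W : Submodule 𝕜 (EuclideanSpace 𝕜 (Fin N)) :=
    Submodule.span 𝕜 (b '' {i : Fin N | (i : ℕ) < k}) with hW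
  set D : EuclideanSpace 𝕜 (Fin N) →L[𝕜] EuclideanSpace 𝕜 (Fin N) :=
    (2 : 𝕜) • ContinuousLinearMap.id 𝕜 _ - (3 / 2 : 𝕜) • W.starProjection with hD
  have hperp : ∀ y ∈ Wᗮ, ‖u y‖ ≤ 1 / 4 * ‖y‖ := by
    intro y hy
    by_cases hy0 : y = 0
    · simp [hy0]
    have hn : ‖y‖ ≠ 0 := by simpa using hy0
    have h1 := hcon (((‖y‖ : 𝕜)⁻¹) • y) (by
      intro i hi
      rw [inner_smul_right, (Submodule.mem_orthogonal W y).1 hy (b i)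
        (Submodule.subset_span ⟨i, hi, rfl⟩), mul_zero]) (by
      rw [norm_smul, norm_inv, RCLike.norm_ofReal, abs_norm, inv_mul_cancel₀ hn])
    rw [map_smul, norm_smul, norm_inv, RCLike.norm_ofReal, abs_norm] at h1
    rw [inv_mul_lt_iff₀ (by positivity)] at h1
    linarith
  have hDn : ‖u.comp D‖ ≤ 1 := by
    refine ContinuousLinearMap.opNorm_le_bound _ zero_le_one fun x => ?_
    have e : D x = (1 / 2 : 𝕜) • W.starProjection x + (2 : 𝕜) • (x - W.starProjection x) := by
      simp only [hD, sub_apply, smul_apply,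
        ContinuousLinearMap.id_apply]
      module
    have h1 : ‖W.starProjection x‖ ≤ ‖x‖ := W.norm_starProjection_apply_le x
    have h2 : ‖x - W.starProjection x‖ ≤ ‖x‖ := by
      rw [← Submodule.starProjection_orthogonal_val]
      exact Wᗮ.norm_starProjection_apply_le x
    have h3 := hperp (x - W.starProjection x) (Submodule.sub_starProjection_mem_orthogonal x)
    rw [ContinuousLinearMap.comp_apply, e, map_add, map_smul, map_smul]
    have h4 := u.le_of_opNorm_le hu (W.starProjection x)
    refine (norm_add_le _ _).trans ?_
    rw [norm_smul, norm_smul]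
    have n2 : ‖(2 : 𝕜)‖ = 2 := by simp
    have n12 : ‖(1 / 2 : 𝕜)‖ = 1 / 2 := by simp
    rw [n2, n12]
    linarith
  have hdet : ‖D.det‖ ≤ 1 := hmax D hDn
  have hDb : ∀ i, D (b i) = (if (i : ℕ) < k then (1 / 2 : 𝕜) else 2) • b i := by
    intro i
    simp only [hD, sub_apply, smul_apply,
        ContinuousLinearMap.id_apply]
    split_ifs with hi
    · rw [Submodule.starProjection_eq_self_iff.2
        (show b i ∈ W from Submodule.subset_span ⟨i, hi, rfl⟩)]
      module
    · rw [(Submodule.starProjection_apply_eq_zero_iff W).2]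
      · simp
      · rw [Submodule.mem_orthogonal]
        intro w hw
        induction hw using Submodule.span_induction with
        | mem w hw =>
          obtain ⟨j, hj, rfl⟩ := hw
          exact b.orthonormal.inner_eq_zero (by rintro rfl; exact hi hj)
        | zero => simp
        | add x y _ _ hx hy => rw [inner_add_left, hx, hy, add_zero]
        | smul a x _ hx => rw [inner_smul_left, hx, mul_zero]
  have hd : D.det = ∏ i : Fin N, (if (i : ℕ) < k then (1 / 2 : 𝕜) else 2) := by
    have : LinearMap.toMatrix b.toBasis b.toBasis (D : _ →ₗ[𝕜] _) =
        Matrix.diagonal (fun i : Fin N => if (i : ℕ) < k then (1 / 2 : 𝕜) else 2) := by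
      ext i j
      rw [LinearMap.toMatrix_apply, Matrix.diagonal_apply]
      simp only [OrthonormalBasis.coe_toBasis, ContinuousLinearMap.coe_coe, hDb]
      rw [map_smul, Finsupp.smul_apply, ← OrthonormalBasis.coe_toBasis, Module.Basis.repr_self,
        Finsupp.single_apply]
      by_cases h : i = j
      · simp [h]
      · simp [h, Ne.symm h]
    rw [ContinuousLinearMap.det, ← LinearMap.det_toMatrix b.toBasis, this, Matrix.det_diagonal]
  rw [hd, norm_prod] at hdet
  have hf : ∀ i : Fin N, ‖(if (i : ℕ) < k then (1 / 2 : 𝕜) else 2)‖ =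
      (fun i : ℕ => if i < k then (1 / 2 : ℝ) else 2) i := by
    intro i; split_ifs <;> simp_all
  simp_rw [hf] at hdet
  rw [Fin.prod_univ_eq_prod_range (fun i : ℕ => if i < k then (1 / 2 : ℝ) else 2) N] at hdet
  obtain ⟨r, rfl⟩ : ∃ r, N = k + (k + 1 + r) := ⟨N - (2 * k + 1), by omega⟩
  rw [Finset.prod_range_add] at hdet
  have e1 : ∏ x ∈ Finset.range k, (if x < k then (1 / 2 : ℝ) else 2) = (1 / 2) ^ k := by
    rw [Finset.prod_congr rfl (g := fun _ => (1 / 2 : ℝ))]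
    · simp
    · intro i hi; rw [if_pos (Finset.mem_range.1 hi)]
  have e2 : ∏ x ∈ Finset.range (k + 1 + r), (if k + x < k then (1 / 2 : ℝ) else 2)
      = 2 ^ (k + 1 + r) := by simp
  rw [e1, e2, add_assoc, pow_add, ← mul_assoc, ← mul_pow] at hdet
  norm_num at hdet
  have : (1 : ℝ) < 2 ^ (1 + r) := one_lt_pow₀ (by norm_num) (by omega)
  linarith

lemma dr_greedy {𝕜 : Type*} [RCLike 𝕜] {E : Type*} [NormedAddCommGroup E] [NormedSpace 𝕜 E]
    {N : ℕ} (u : EuclideanSpace 𝕜 (Fin N) →L[𝕜] E) (hu : ‖u‖ ≤ 1)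
    (hmax : ∀ D : EuclideanSpace 𝕜 (Fin N) →L[𝕜] EuclideanSpace 𝕜 (Fin N),
      ‖u.comp D‖ ≤ 1 → ‖D.det‖ ≤ 1) (k : ℕ) (hk : 2 * k ≤ N) :
    ∃ b : OrthonormalBasis (Fin N) 𝕜 (EuclideanSpace 𝕜 (Fin N)),
      ∀ i : Fin N, (i : ℕ) < k → 1 / 4 ≤ ‖u (b i)‖ := by
  classical
  induction k with
  | zero => exact ⟨EuclideanSpace.basisFun _ _, by simp⟩
  | succ k ih =>
    obtain ⟨b, hb⟩ := ih (by omega)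
    obtain ⟨x, hx0, hx1, hx⟩ := dr_step (k := k) (by omega) u hu hmax b
    set v : Fin N → EuclideanSpace 𝕜 (Fin N) := Function.update b ⟨k, by omega⟩ x with hv
    have hvk : v ⟨k, by omega⟩ = x := by simp [hv]
    have hvl : ∀ i : Fin N, (i : ℕ) < k → v i = b i := by
      intro i hi
      rw [hv, Function.update_of_ne]
      rintro rfl
      simp at hi
    have key : ∀ i : Fin N, (i : ℕ) < k + 1 → (i : ℕ) < k ∨ i = ⟨k, by omega⟩ := by
      intro i hi
      rcases Nat.lt_succ_iff_lt_or_eq.1 hi with h | h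
      · exact Or.inl h
      · exact Or.inr (Fin.ext h)
    obtain ⟨b', hb'⟩ := Orthonormal.exists_orthonormalBasis_extension_of_card_eq (𝕜 := 𝕜)
      (E := EuclideanSpace 𝕜 (Fin N)) (ι := Fin N) (by simp) (v := v)
      (s := {i : Fin N | (i : ℕ) < k + 1}) (by
        constructor
        · rintro ⟨i, hi⟩
          rcases key i hi with h | rfl
          · simp [Set.domRestrict_apply, hvl i h]
          · simp [Set.domRestrict_apply, hvk, hx1]
        · rintro ⟨i, hi⟩ ⟨j, hj⟩ hij
          have hij' : i ≠ j := fun h => hij (Subtype.ext h)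
          simp only [Set.domRestrict_apply]
          rcases key i hi with h | rfl <;> rcases key j hj with h' | rfl
          · rw [hvl i h, hvl j h']; exact b.orthonormal.inner_eq_zero hij'
          · rw [hvl i h, hvk]; exact hx0 i h
          · rw [hvl j h', hvk, inner_eq_zero_symm]; exact hx0 j h'
          · exact absurd rfl hij')
    refine ⟨b', fun i hi => ?_⟩
    rw [hb' i hi]
    rcases key i hi with h | rfl
    · rw [hvl i h]; exact hb i h
    · rw [hvk]; exact hx

lemma dr_core {𝕜 : Type*} [RCLike 𝕜] {E : Type*} [NormedAddCommGroup E] [NormedSpace 𝕜 E]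
    (hE : ¬ FiniteDimensional 𝕜 E) (k : ℕ) :
    ∃ y : Fin k → E, (∀ j, 1 / 4 ≤ ‖y j‖) ∧
      ∀ ψ : E →L[𝕜] 𝕜, ‖ψ‖ ≤ 1 → ∑ j, ‖ψ (y j)‖ ^ 2 ≤ 1 := by
  classical
  have hrank : ((2 * k : ℕ) : Cardinal) ≤ Module.rank 𝕜 E := by
    have : Cardinal.aleph0 ≤ Module.rank 𝕜 E := by
      by_contra h
      exact hE (Module.rank_lt_aleph0_iff.1 (not_le.1 h))
    exact (Cardinal.natCast_lt_aleph0).le.trans this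
  obtain ⟨f, hf⟩ := Module.le_rank_iff_exists_linearMap.1 hrank
  set H := EuclideanSpace 𝕜 (Fin (2 * k)) with hH
  let L : H →L[𝕜] E := LinearMap.toContinuousLinearMap
    (f.comp (WithLp.linearEquiv 2 𝕜 (Fin (2 * k) → 𝕜)).toLinearMap)
  have hL : Function.Injective L := hf.comp (WithLp.linearEquiv 2 𝕜 (Fin (2 * k) → 𝕜)).injective
  obtain ⟨K, hK, hKL⟩ := LinearMap.exists_antilipschitzWith (L : H →ₗ[𝕜] E)
    (LinearMap.ker_eq_bot.2 hL)
  have hKL' : ∀ x, ‖x‖ ≤ K * ‖L x‖ := fun x => by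
    simpa using hKL.le_mul_dist x 0
  let S : Set (H →L[𝕜] H) := {A | ‖L.comp A‖ ≤ 1}
  have hcont : Continuous fun A : H →L[𝕜] H => L.comp A :=
    (ContinuousLinearMap.compL 𝕜 H H E L).continuous
  have hSc : IsClosed S := isClosed_le hcont.norm continuous_const
  have hSb : S ⊆ Metric.closedBall 0 (K : ℝ) := by
    intro A hA
    rw [mem_closedBall_zero_iff]
    refine ContinuousLinearMap.opNorm_le_bound _ K.2 fun x => (hKL' (A x)).trans ?_
    gcongr
    simpa using (L.comp A).le_of_opNorm_le hA x
  have : ProperSpace (H →L[𝕜] H) := FiniteDimensional.proper 𝕜 _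
  have hScomp : IsCompact S := (isCompact_closedBall _ _).of_isClosed_subset hSc hSb
  set c : 𝕜 := (((‖L‖ + 1)⁻¹ : ℝ) : 𝕜) with hc
  have hLp : 0 < ‖L‖ + 1 := by positivity
  have hc0 : c ≠ 0 := by
    rw [hc]; exact_mod_cast inv_ne_zero hLp.ne'
  have hcS : c • ContinuousLinearMap.id 𝕜 H ∈ S := by
    change ‖L.comp (c • ContinuousLinearMap.id 𝕜 H)‖ ≤ 1
    rw [ContinuousLinearMap.comp_smul, ContinuousLinearMap.comp_id, norm_smul, hc,
      RCLike.norm_ofReal, abs_of_pos (by positivity), inv_mul_le_iff₀ hLp]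
    linarith
  obtain ⟨A, hAS, hAmax⟩ := hScomp.exists_isMaxOn ⟨_, hcS⟩
    (f := fun A : H →L[𝕜] H => ‖A.det‖) ContinuousLinearMap.continuous_det.norm.continuousOn
  have hdet : 0 < ‖A.det‖ := by
    refine lt_of_lt_of_le ?_ (hAmax hcS)
    rw [norm_pos_iff, ContinuousLinearMap.det]
    simp [LinearMap.det_smul, hc0]
  obtain ⟨b, hb⟩ := dr_greedy (L.comp A) hAS (by
    intro D hD
    have h := hAmax (show A.comp D ∈ S from hD)
    have e : (A.comp D).det = A.det * D.det := by
      simp [ContinuousLinearMap.det, LinearMap.det_comp]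
    simp only [Set.mem_ofPred_eq, e, norm_mul] at h
    nlinarith [hdet]) k le_rfl
  refine ⟨fun j => L (A (b ⟨j, by omega⟩)), fun j => hb _ j.2, fun ψ hψ => ?_⟩
  set ψ' : H →L[𝕜] 𝕜 := ψ.comp (L.comp A) with hψ'
  have hn : ‖ψ'‖ ≤ 1 := by
    refine (ContinuousLinearMap.opNorm_comp_le _ _).trans ?_
    exact mul_le_one₀ hψ (norm_nonneg _) hAS
  set w := (InnerProductSpace.toDual 𝕜 H).symm ψ' with hw
  have hwn : ‖w‖ ≤ 1 := by rw [hw, LinearIsometryEquiv.norm_map]; exact hn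
  have ho : Orthonormal 𝕜 (fun j : Fin k => b ⟨j, by omega⟩) :=
    b.orthonormal.comp (fun j : Fin k => (⟨j, by omega⟩ : Fin (2 * k)))
      (fun i j h => Fin.ext (by simpa using h))
  have hB := ho.sum_inner_products_le w (s := Finset.univ)
  have hval : ∀ j : Fin k, ‖ψ (L (A (b ⟨j, by omega⟩)))‖ =
      ‖inner 𝕜 (b (⟨j, by omega⟩ : Fin (2 * k))) w‖ := by
    intro j
    rw [norm_inner_symm, hw, InnerProductSpace.toDual_symm_apply]
    rfl
  simp_rw [hval]
  refine hB.trans ?_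
  exact pow_le_one₀ (norm_nonneg _) hwn

lemma sfs_of_finiteDimensional {𝕜 : Type*} [RCLike 𝕜] {E : Type*}
    [NormedAddCommGroup E] [NormedSpace 𝕜 E] [FiniteDimensional 𝕜 E]
    {n : ℕ} {p : ℝ} (hp : 0 < p) (T : ContinuousMultilinearMap 𝕜 (fun _ : Fin n => E) E) :
      ∃ C, 0 ≤ C ∧ ∀ (m : ℕ) (x : Fin n → Fin m → E),
        (∑ j : Fin n → Fin m, ‖T (fun i => x i (j i))‖ ^ p) ^ (1 / p) ≤
          C * ⨆ φ : {φ : ContinuousMultilinearMap 𝕜 (fun _ : Fin n => E) 𝕜 // ‖φ‖ ≤ 1},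
            (∑ j : Fin n → Fin m, ‖φ.1 (fun i => x i (j i))‖ ^ p) ^ (1 / p) := by
  classical
  set d := Module.finrank 𝕜 E with hd
  let b : Module.Basis (Fin d) 𝕜 E := Module.finBasis 𝕜 E
  let co : Fin d → (E →L[𝕜] 𝕜) := fun k => LinearMap.toContinuousLinearMap (b.coord k)
  let g : Fin d → ContinuousMultilinearMap 𝕜 (fun _ : Fin n => E) 𝕜 :=
    fun k => (co k).compContinuousMultilinearMap T
  let c : Fin d → ℝ := fun k => ‖g k‖ + 1
  have hc : ∀ k, 0 < c k := fun k => by positivity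
  let φ : Fin d → ContinuousMultilinearMap 𝕜 (fun _ : Fin n => E) 𝕜 :=
    fun k => (((c k)⁻¹ : ℝ) : 𝕜) • g k
  have hφ : ∀ k, ‖φ k‖ ≤ 1 := by
    intro k
    simp only [φ]
    rw [norm_smul, RCLike.norm_ofReal, abs_of_pos (inv_pos.2 (hc k)), inv_mul_le_iff₀ (hc k)]
    simp [c]
  let R : ℝ := ∑ k, c k * ‖b k‖
  have hR : 0 ≤ R := Finset.sum_nonneg fun k _ => mul_nonneg (hc k).le (norm_nonneg _)
  have hpt : ∀ z, ‖T z‖ ^ p ≤ R ^ p * ∑ k, ‖φ k z‖ ^ p := by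
    intro z
    set s := ∑ k, ‖φ k z‖ ^ p with hs
    have hs0 : 0 ≤ s := Finset.sum_nonneg fun k _ => by positivity
    have h1 : ‖T z‖ ≤ R * s ^ (1 / p) := by
      calc ‖T z‖ = ‖∑ k, b.repr (T z) k • b k‖ := by rw [b.sum_repr]
        _ ≤ ∑ k, ‖b.repr (T z) k • b k‖ := norm_sum_le _ _
        _ ≤ ∑ k, (c k * ‖b k‖) * s ^ (1 / p) := by
          refine Finset.sum_le_sum fun k _ => ?_
          have e : b.repr (T z) k = ((c k : ℝ) : 𝕜) * φ k z := by
            have : φ k z = (((c k)⁻¹ : ℝ) : 𝕜) * b.repr (T z) k := rfl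
            rw [this, ← mul_assoc, ← RCLike.ofReal_mul, mul_inv_cancel₀ (hc k).ne']
            simp
          have h2 : ‖φ k z‖ ≤ s ^ (1 / p) := by
            rw [one_div, Real.le_rpow_inv_iff_of_pos (norm_nonneg _) hs0 hp]
            exact Finset.single_le_sum (f := fun k => ‖φ k z‖ ^ p)
              (fun k _ => by positivity) (Finset.mem_univ k)
          rw [norm_smul, e, norm_mul, RCLike.norm_ofReal, abs_of_pos (hc k)]
          have := mul_le_mul_of_nonneg_left h2 (mul_nonneg (hc k).le (norm_nonneg (b k)))
          linarith
        _ = R * s ^ (1 / p) := by rw [Finset.sum_mul]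
    calc ‖T z‖ ^ p ≤ (R * s ^ (1 / p)) ^ p := Real.rpow_le_rpow (norm_nonneg _) h1 hp.le
      _ = R ^ p * s := by
        rw [Real.mul_rpow hR (by positivity), one_div, Real.rpow_inv_rpow hs0 hp.ne']
  refine ⟨R * (d : ℝ) ^ (1 / p), by positivity, fun m x => ?_⟩
  set F : {φ : ContinuousMultilinearMap 𝕜 (fun _ : Fin n => E) 𝕜 // ‖φ‖ ≤ 1} → ℝ :=
    fun φ => (∑ j : Fin n → Fin m, ‖φ.1 (fun i => x i (j i))‖ ^ p) ^ (1 / p) with hF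
  have hbdd : BddAbove (Set.range F) := by
    refine ⟨(∑ j : Fin n → Fin m, (∏ i, ‖x i (j i)‖) ^ p) ^ (1 / p), ?_⟩
    rintro _ ⟨ψ, rfl⟩
    refine Real.rpow_le_rpow (by positivity) (Finset.sum_le_sum fun j _ => ?_) (by positivity)
    refine Real.rpow_le_rpow (norm_nonneg _) ?_ hp.le
    refine (ψ.1.le_opNorm _).trans ?_
    exact mul_le_of_le_one_left (by positivity) ψ.2
  have hS0 : 0 ≤ ⨆ ψ, F ψ := Real.iSup_nonneg fun ψ => by positivity
  have hS : ∀ k, ∑ j : Fin n → Fin m, ‖φ k (fun i => x i (j i))‖ ^ p ≤ (⨆ ψ, F ψ) ^ p := by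
    intro k
    have := le_ciSup hbdd ⟨φ k, hφ k⟩
    simp only [hF, one_div] at this
    rw [Real.rpow_inv_le_iff_of_pos (by positivity) (by simpa [hF] using hS0) hp] at this
    simpa [hF] using this
  have hsum : ∑ j : Fin n → Fin m, ‖T (fun i => x i (j i))‖ ^ p ≤
      R ^ p * (d * (⨆ ψ, F ψ) ^ p) := by
    calc _ ≤ ∑ j : Fin n → Fin m, R ^ p * ∑ k, ‖φ k (fun i => x i (j i))‖ ^ p :=
          Finset.sum_le_sum fun j _ => hpt _
      _ = R ^ p * ∑ k, ∑ j : Fin n → Fin m, ‖φ k (fun i => x i (j i))‖ ^ p := by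
          rw [← Finset.mul_sum, Finset.sum_comm]
      _ ≤ R ^ p * ∑ k : Fin d, (⨆ ψ, F ψ) ^ p := by
          gcongr with k
          exact hS k
      _ = _ := by simp
  refine (Real.rpow_le_rpow (by positivity) hsum (by positivity)).trans (le_of_eq ?_)
  rw [Real.mul_rpow (by positivity) (by positivity), Real.mul_rpow (by positivity) (by positivity),
    one_div, Real.rpow_rpow_inv hR hp.ne', Real.rpow_rpow_inv hS0 hp.ne', mul_assoc]

lemma sum_cons_single {n m : ℕ} (G : (Fin (n + 1) → Fin (m + 1)) → ℝ)
    (hG : ∀ j, ∀ i : Fin n, j i.succ ≠ 0 → G j = 0) :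
    ∑ j, G j = ∑ j0, G (Fin.cons j0 (fun _ => 0)) := by
  rw [← (Fin.consEquiv (fun _ : Fin (n + 1) => Fin (m + 1))).sum_comp, Fintype.sum_prod_type]
  refine Finset.sum_congr rfl fun j0 _ => ?_
  refine Finset.sum_eq_single (fun _ => 0) (fun j _ hj => ?_) (by simp)
  obtain ⟨i, hi⟩ := Function.ne_iff.1 hj
  exact hG _ i (by simpa [Fin.consEquiv] using hi)

lemma finiteDimensional_of_sfs {𝕜 : Type*} [RCLike 𝕜] {E : Type*}
    [NormedAddCommGroup E] [NormedSpace 𝕜 E] {n : ℕ} {p : ℝ} (hp : 0 < p)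
    (h : ∀ T : ContinuousMultilinearMap 𝕜 (fun _ : Fin (n + 1) => E) E,
      ∃ C, 0 ≤ C ∧ ∀ (m : ℕ) (x : Fin (n + 1) → Fin m → E),
        (∑ j : Fin (n + 1) → Fin m, ‖T (fun i => x i (j i))‖ ^ p) ^ (1 / p) ≤
          C * ⨆ φ : {φ : ContinuousMultilinearMap 𝕜 (fun _ : Fin (n + 1) => E) 𝕜 // ‖φ‖ ≤ 1},
            (∑ j : Fin (n + 1) → Fin m, ‖φ.1 (fun i => x i (j i))‖ ^ p) ^ (1 / p)) :
    FiniteDimensional 𝕜 E := by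
  classical
  by_contra hE
  obtain ⟨a, f, ha, hfa⟩ : ∃ (a : E) (f : E →L[𝕜] 𝕜), ‖a‖ = 1 ∧ f a = 1 := by
    obtain ⟨y, hy, -⟩ := dr_core hE 1
    have hy0 : ‖y 0‖ ≠ 0 := by have := hy 0; linarith
    obtain ⟨f, -, hf⟩ := exists_dual_vector 𝕜 (y 0) hy0
    have hy0' : (‖y 0‖ : 𝕜) ≠ 0 := by exact_mod_cast hy0
    refine ⟨(‖y 0‖ : 𝕜)⁻¹ • y 0, f, ?_, ?_⟩
    · rw [norm_smul, norm_inv, RCLike.norm_ofReal, abs_norm, inv_mul_cancel₀ hy0]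
    · rw [map_smul, hf, smul_eq_mul, inv_mul_cancel₀ hy0']
  let q : ContinuousMultilinearMap 𝕜 (fun _ : Fin n => E) 𝕜 :=
    (ContinuousMultilinearMap.mkPiAlgebra 𝕜 (Fin n) 𝕜).compContinuousLinearMap (fun _ => f)
  let T : ContinuousMultilinearMap 𝕜 (fun _ : Fin (n + 1) => E) E :=
    ContinuousLinearMap.uncurryLeft (Ei := fun _ : Fin (n + 1) => E)
      (ContinuousMultilinearMap.smulRightL 𝕜 (fun _ : Fin n => E) E q)
  have hT : ∀ z, T z = (∏ i : Fin n, f (z i.succ)) • z 0 := by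
    intro z
    simp [T, q, ContinuousLinearMap.uncurryLeft_apply, Fin.tail]
  obtain ⟨C, hC, hCb⟩ := h T
  -- choose `ε`
  obtain ⟨ε, hε0, hε⟩ : ∃ ε : ℝ, 0 < ε ∧ C ^ p * ε ^ p < (1 / 4) ^ p / 2 := by
    set r : ℝ := (1 / 4) ^ p / 2 / (C ^ p + 1) with hr
    have hCp : 0 ≤ C ^ p := by positivity
    have hr0 : 0 < r := by positivity
    refine ⟨r ^ (1 / p), by positivity, ?_⟩
    rw [one_div, Real.rpow_inv_rpow hr0.le hp.ne', hr, mul_div_assoc', div_lt_iff₀ (by positivity)]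
    have : (0 : ℝ) < (1 / 4) ^ p / 2 := by positivity
    nlinarith
  obtain ⟨k, hk⟩ := exists_nat_gt (C ^ p * (1 / ε ^ 2) / ((1 / 4) ^ p / 2))
  obtain ⟨y, hy, hψ⟩ := dr_core hE (k + 1)
  let x : Fin (n + 1) → Fin (k + 1) → E :=
    fun i => Fin.cases (motive := fun _ => Fin (k + 1) → E) y
      (fun _ j => if j = 0 then a else 0) i
  have hx0 : ∀ j, x 0 j = y j := fun j => rfl
  have hxs : ∀ (i : Fin n) j, x i.succ j = if j = 0 then a else 0 := fun i j => rfl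
  have main := hCb (k + 1) x
  have hupd : ∀ j0 : Fin (k + 1), (fun i => x i ((Fin.cons j0 (fun _ => 0) :
      Fin (n + 1) → Fin (k + 1)) i)) = Function.update (fun _ => a) 0 (y j0) := by
    intro j0
    funext i
    refine Fin.cases ?_ (fun i => ?_) i
    · simp [hx0]
    · simp [hxs]
  have hleft : ∑ j : Fin (n + 1) → Fin (k + 1), ‖T (fun i => x i (j i))‖ ^ p =
      ∑ j0, ‖y j0‖ ^ p := by
    rw [sum_cons_single]
    · refine Finset.sum_congr rfl fun j0 _ => ?_
      rw [hupd, hT]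
      simp [hfa]
    · intro j i hi
      have : T (fun i => x i (j i)) = 0 :=
        T.map_coord_zero i.succ (by rw [hxs, if_neg hi])
      rw [this, norm_zero, Real.zero_rpow hp.ne']
  set B : ℝ := (k + 1 : ℕ) * ε ^ p + 1 / ε ^ 2 with hB
  have hB0 : 0 ≤ B := by positivity
  have hright : (⨆ φ : {φ : ContinuousMultilinearMap 𝕜 (fun _ : Fin (n + 1) => E) 𝕜 // ‖φ‖ ≤ 1},
      (∑ j : Fin (n + 1) → Fin (k + 1), ‖φ.1 (fun i => x i (j i))‖ ^ p) ^ (1 / p))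
        ≤ B ^ (1 / p) := by
    have : Nonempty {φ : ContinuousMultilinearMap 𝕜 (fun _ : Fin (n + 1) => E) 𝕜 // ‖φ‖ ≤ 1} :=
      ⟨⟨0, by simp⟩⟩
    refine ciSup_le fun φ => ?_
    refine Real.rpow_le_rpow (by positivity) ?_ (by positivity)
    rw [sum_cons_single]
    · let ψ : E →L[𝕜] 𝕜 := φ.1.toContinuousLinearMap (fun _ => a) 0
      have hψn : ‖ψ‖ ≤ 1 := by
        refine ContinuousLinearMap.opNorm_le_bound _ zero_le_one fun z => ?_
        have h1 : ψ z = φ.1 (Function.update (fun _ => a) 0 z) := rfl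
        rw [h1]
        refine (φ.1.le_opNorm _).trans ?_
        refine mul_le_mul φ.2 (le_of_eq ?_) (by positivity) zero_le_one
        rw [Fin.prod_univ_succ]
        simp [ha]
      have h2 := hψ ψ hψn
      have h3 : ∀ j0 : Fin (k + 1), ‖φ.1 (fun i => x i ((Fin.cons j0 (fun _ => 0) :
          Fin (n + 1) → Fin (k + 1)) i))‖ ^ p ≤ ε ^ p + 1 / ε ^ 2 * ‖ψ (y j0)‖ ^ 2 := by
        intro j0
        rw [hupd]
        change ‖ψ (y j0)‖ ^ p ≤ _
        set t := ‖ψ (y j0)‖ with ht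
        have ht0 : 0 ≤ t := norm_nonneg _
        have ht1 : t ^ 2 ≤ 1 := le_trans (Finset.single_le_sum
          (f := fun j => ‖ψ (y j)‖ ^ 2) (fun j _ => by positivity) (Finset.mem_univ j0)) h2
        have ht1' : t ≤ 1 := by nlinarith
        rcases le_total t ε with hle | hle
        · have := Real.rpow_le_rpow ht0 hle hp.le
          have : 0 ≤ 1 / ε ^ 2 * t ^ 2 := by positivity
          linarith
        · have h4 : t ^ p ≤ 1 := Real.rpow_le_one ht0 ht1' hp.le
          have h5 : 1 ≤ 1 / ε ^ 2 * t ^ 2 := by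
            rw [one_div, le_inv_mul_iff₀ (by positivity), mul_one]
            gcongr
          have : 0 ≤ ε ^ p := by positivity
          linarith
      refine (Finset.sum_le_sum fun j0 _ => h3 j0).trans ?_
      rw [Finset.sum_add_distrib, ← Finset.mul_sum, Finset.sum_const, Finset.card_univ,
        Fintype.card_fin, nsmul_eq_mul]
      have : 1 / ε ^ 2 * ∑ j, ‖ψ (y j)‖ ^ 2 ≤ 1 / ε ^ 2 :=
        mul_le_of_le_one_right (by positivity) h2
      linarith
    · intro j i hi
      have : φ.1 (fun i => x i (j i)) = 0 :=
        φ.1.map_coord_zero i.succ (by rw [hxs, if_neg hi])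
      rw [this, norm_zero, Real.zero_rpow hp.ne']
  rw [hleft] at main
  have main2 := main.trans (mul_le_mul_of_nonneg_left hright hC)
  have main3 := Real.rpow_le_rpow (by positivity) main2 hp.le
  rw [Real.mul_rpow hC (by positivity), one_div, Real.rpow_inv_rpow (by positivity) hp.ne',
    Real.rpow_inv_rpow hB0 hp.ne'] at main3
  have hlow : ((k + 1 : ℕ) : ℝ) * (1 / 4) ^ p ≤ ∑ j0, ‖y j0‖ ^ p := by
    have : ∑ j0 : Fin (k + 1), ((1 / 4 : ℝ)) ^ p ≤ ∑ j0, ‖y j0‖ ^ p :=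
      Finset.sum_le_sum fun j _ => Real.rpow_le_rpow (by norm_num) (hy j) hp.le
    simpa using this
  have h6 := hlow.trans main3
  rw [div_lt_iff₀ (by positivity)] at hk
  rw [hB] at h6
  push_cast at h6
  have hk0 : (0 : ℝ) ≤ k := by positivity
  have hq : (0 : ℝ) < (1 / 4) ^ p := by positivity
  nlinarith [mul_le_mul_of_nonneg_left hε.le (by positivity : (0 : ℝ) ≤ (k : ℝ) + 1)]


/-- Every continuous `n`-linear map from `E × ⋯ × E` into `E` (`n ≥ 2`) is
strongly fully `p`-summing if and only if `E` is finite-dimensional. -/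
theorem stronglyFullySumming_iff_finiteDimensional {𝕜 : Type*} [RCLike 𝕜] {E : Type*}
    [NormedAddCommGroup E] [NormedSpace 𝕜 E] [CompleteSpace E]
    {n : ℕ} (hn : 2 ≤ n) {p : ℝ} (hp : 0 < p) :
    (∀ T : ContinuousMultilinearMap 𝕜 (fun _ : Fin n => E) E,
      ∃ C, 0 ≤ C ∧ ∀ (m : ℕ) (x : Fin n → Fin m → E),
        (∑ j : Fin n → Fin m, ‖T (fun i => x i (j i))‖ ^ p) ^ (1 / p) ≤
          C * ⨆ φ : {φ : ContinuousMultilinearMap 𝕜 (fun _ : Fin n => E) 𝕜 // ‖φ‖ ≤ 1},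
            (∑ j : Fin n → Fin m, ‖φ.1 (fun i => x i (j i))‖ ^ p) ^ (1 / p)) ↔
    FiniteDimensional 𝕜 E := by
  constructor
  · intro h
    obtain ⟨n, rfl⟩ : ∃ k, n = k + 1 := ⟨n - 1, by omega⟩
    exact finiteDimensional_of_sfs hp h
  · intro hE T
    exact sfs_of_finiteDimensional hp T
end
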